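/- arXiv:1503.05478 — 5 statements merged into one kernel-verified Lean document; each statement's English description precedes it below -/
import Mathlib

section
/- Let k be a field, V a nonzero finite-dimensional k-vector space, and g ∈ GL(V) an automorphism with g ≠ 1 which fixes some hyperplane of V pointwise. If g has finite order m and m is invertible in k (i.e. the characteristic of k does not divide m), then det(g) ≠ 1. -/
/-!
Write the hyperplane as the kernel of a linear form `f`. Since `g - 1` vanishes on it, `g` has the
shape `x ↦ x + f x • u`, and its determinant is `1 + f u`. If this is `1`, then `f u = 0`, so that
`g ^ n` is `x ↦ x + f x • (n • u)`; when `g ^ n = 1` and `n` acts injectively, this forces `u = 0`.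
-/

open LinearMap Module

section Semiring

variable {R V : Type*} [Semiring R] [AddCommMonoid V] [Module R V]

theorem transvection_pow {f : Dual R V} {u : V} (hu : f u = 0) (n : ℕ) :
    transvection f u ^ n = transvection f (n • u) := by
  induction n with
  | zero => rw [pow_zero, zero_nsmul, transvection.of_right_eq_zero, End.one_eq_id]
  | succ n ih => rw [pow_succ, ih, End.mul_eq_comp, transvection.comp_of_left_eq hu, succ_nsmul]

end Semiring

section Ring

variable {R V : Type*} [Ring R] [AddCommGroup V] [Module R V] {f : Dual R V} {v : V}

theorem eq_transvection_of_forall_mem_ker {g : End R V} (hv : f v = 1)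
    (hfix : ∀ w ∈ ker f, g w = w) : g = transvection f (g v - v) := by
  ext x
  have hmem : x - f x • v ∈ ker f := by simp [hv]
  have hx : g x - f x • g v = x - f x • v := by
    simpa only [map_sub, map_smul] using hfix _ hmem
  rw [transvection.apply, sub_eq_iff_eq_add.mp hx, smul_sub]
  abel

theorem transvection_eq_one_iff (hv : f v = 1) {u : V} : transvection f u = 1 ↔ u = 0 := by
  refine ⟨fun h ↦ ?_, fun h ↦ by rw [h, transvection.of_right_eq_zero, End.one_eq_id]⟩
  simpa [transvection.apply, hv] using LinearMap.congr_fun h v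

end Ring

section CommRing

variable {R V : Type*} [CommRing R] [AddCommGroup V] [Module R V]

theorem exists_ker_eq_of_finrank_quotient_eq_one [Nontrivial R] [Module.Finite R V]
    (W : Submodule R V) [Free R (V ⧸ W)] (hW : finrank R (V ⧸ W) = 1) :
    ∃ f : Dual R V, ker f = W ∧ ∃ v, f v = 1 := by
  obtain ⟨e⟩ : Nonempty (R ≃ₗ[R] V ⧸ W) := nonempty_linearEquiv_of_finrank_eq_one hW
  refine ⟨e.symm.toLinearMap ∘ₗ W.mkQ, ?_, (e.symm.surjective.comp W.mkQ_surjective) 1⟩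
  rw [LinearEquiv.ker_comp, W.ker_mkQ]

variable [Free R V] [Module.Finite R V]

theorem eq_one_of_forall_mem_ker_of_det_eq_one {g : End R V} {f : Dual R V} {v : V}
    (hv : f v = 1) (hfix : ∀ w ∈ ker f, g w = w) (hdet : LinearMap.det g = 1)
    {n : ℕ} (hn : IsSMulRegular V n) (hpow : g ^ n = 1) : g = 1 := by
  obtain ⟨u, rfl⟩ : ∃ u, g = transvection f u := ⟨_, eq_transvection_of_forall_mem_ker hv hfix⟩
  have hu : f u = 0 := by rwa [transvection.det, add_eq_left] at hdet
  rw [transvection_pow hu, transvection_eq_one_iff hv] at hpow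
  exact (transvection_eq_one_iff hv).mpr (hn.right_eq_zero_of_smul hpow)

theorem det_ne_one_of_pseudoreflection_general (g : V ≃ₗ[R] V) (hg : g ≠ 1)
    (W : Submodule R V) [Free R (V ⧸ W)] (hW : finrank R (V ⧸ W) = 1)
    (hfix : ∀ w ∈ W, g w = w) (hreg : IsRegular (orderOf g : R)) :
    LinearMap.det (g : V →ₗ[R] V) ≠ 1 := by
  intro hdet
  have : Nontrivial V := not_subsingleton_iff_nontrivial.mp fun _ ↦ hg (Subsingleton.elim _ _)
  have : Nontrivial R := Module.nontrivial R V
  obtain ⟨f, rfl, v, hv⟩ := exists_ker_eq_of_finrank_quotient_eq_one W hW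
  have hn : IsSMulRegular V (orderOf g) := fun x y h ↦
    hreg.isSMulRegular (by simpa only [Nat.cast_smul_eq_nsmul] using h)
  have hpow : (g : End R V) ^ orderOf g = 1 :=
    (map_pow LinearEquiv.automorphismGroup.toLinearMapMonoidHom g _).symm.trans
      (by rw [pow_orderOf_eq_one, map_one])
  exact hg (LinearEquiv.toLinearMap_injective
    (eq_one_of_forall_mem_ker_of_det_eq_one hv hfix hdet hn hpow))

end CommRing

/-- Let `k` be a field, `V` a nonzero finite-dimensional `k`-vector space, and `g ∈ GL(V)`
an automorphism with `g ≠ 1` which fixes some hyperplane of `V` pointwise. If `g` has finite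
order `m` and `m` is invertible in `k`, then `det g ≠ 1`. -/
theorem det_ne_one_of_pseudoreflection {k V : Type*} [Field k] [AddCommGroup V] [Module k V]
    [FiniteDimensional k V] [Nontrivial V]
    (g : V ≃ₗ[k] V) (hg : g ≠ 1)
    (W : Submodule k V) (hW : Module.finrank k (V ⧸ W) = 1)
    (hfix : ∀ w ∈ W, g w = w)
    (m : ℕ) (hord : orderOf g = m) (hm : (m : k) ≠ 0) :
    LinearMap.det (g : V →ₗ[k] V) ≠ 1 :=
  det_ne_one_of_pseudoreflection_general g hg W hW hfix (hord ▸ IsRegular.of_ne_zero hm)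
end

section
/- Let V be a finite-dimensional complex vector space, H a finite subgroup of GL(V), W a hyperplane of V, and f = ∏_{U ∈ H·W} ℓ_U the product of chosen nonzero linear functionals vanishing on the hyperplanes in the H-orbit of W, with χ : H → ℂ* the character defined by h·f = χ(h)·f. Let r ∈ H be a pseudoreflection with fixed hyperplane W_r. If W_r belongs to the H-orbit of W, then χ(r) = det(r)^{−1}; otherwise χ(r) = 1. -/
open scoped Classical

/-!
If a linear map `g` fixes a hyperplane `p` pointwise, then `l ∘ g = det g • l` for every functional
`l` with kernel `p`. Suppose that a product of functionals satisfies `f ∘ g = c • f`, and write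
`f = P * Q`, where `P` collects the `m` factors with kernel `p`. Then `P ∘ g = (det g) ^ m • P`, and
cancelling `P` gives `(det g) ^ m • (Q ∘ g) = c • Q` off `p`, hence everywhere, both sides being
polynomial. At a point of `p` where `Q` does not vanish, `g` acts trivially, so `c = (det g) ^ m`.
For a pseudoreflection `r`, take `g = r⁻¹`; the exponent `m` is `1` or `0` according as the fixed
hyperplane is in the orbit or not.
-/

open Finset Module Polynomial

section Hyperplanes

theorem finrank_quotient_map_equiv {R M N : Type*} [Ring R] [AddCommGroup M] [Module R M]
    [AddCommGroup N] [Module R N] (e : M ≃ₗ[R] N) (p : Submodule R M) :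
    finrank R (N ⧸ p.map (e : M →ₗ[R] N)) = finrank R (M ⧸ p) :=
  (Submodule.Quotient.equiv p _ e rfl).finrank_eq.symm

theorem isCoatom_iff_finrank_quotient_eq_one {K V : Type*} [DivisionRing K] [AddCommGroup V]
    [Module K V] {p : Submodule K V} : IsCoatom p ↔ finrank K (V ⧸ p) = 1 := by
  rw [← isSimpleModule_iff_isCoatom, isSimpleModule_iff_finrank_eq_one]

theorem le_ker_iff_ker_eq {R M N : Type*} [Semiring R] [AddCommMonoid M] [Module R M]
    [AddCommMonoid N] [Module R N] {p : Submodule R M} {f : M →ₗ[R] N} (hp : IsCoatom p)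
    (hf : f ≠ 0) : p ≤ f.ker ↔ f.ker = p :=
  hp.le_iff_eq (mt LinearMap.ker_eq_top.mp hf)

end Hyperplanes

section FixedHyperplane

variable {K V : Type*} [Field K] [AddCommGroup V] [Module K V] {l : Dual K V} {g : V →ₗ[K] V}

theorem exists_eq_transvection_of_fixes_ker (hg : ∀ v ∈ l.ker, g v = v) :
    ∃ a, g = LinearMap.transvection l a := by
  obtain rfl | hl := eq_or_ne l 0
  · exact ⟨0, LinearMap.ext fun v => by simp [hg]⟩
  obtain ⟨u, hu⟩ := LinearMap.surjective hl 1
  refine ⟨g u - u, LinearMap.ext fun v => ?_⟩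
  have hfix : g v - l v • g u = v - l v • u := by
    simpa using hg (v - l v • u) (by simp [hu])
  rw [LinearMap.transvection.apply, sub_eq_iff_eq_add.mp hfix]
  module

theorem apply_eq_det_mul_of_fixes_ker [FiniteDimensional K V] (hg : ∀ v ∈ l.ker, g v = v)
    (v : V) : l (g v) = LinearMap.det g * l v := by
  obtain ⟨a, rfl⟩ := exists_eq_transvection_of_fixes_ker hg
  rw [LinearMap.transvection.det, LinearMap.transvection.apply, map_add, map_smul, smul_eq_mul]
  ring

end FixedHyperplane

section ProductsOfFunctionals

theorem exists_polynomial_eval_eq_prod_apply_add_smul {ι R M : Type*} [CommSemiring R]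
    [AddCommMonoid M] [Module R M] (s : Finset ι) (l : ι → Dual R M) (v u : M) :
    ∃ P : R[X], ∀ t, P.eval t = ∏ i ∈ s, l i (v + t • u) :=
  ⟨∏ i ∈ s, (C (l i v) + C (l i u) * X), fun t => by simp [eval_prod, mul_comm t]⟩

variable {ι K V : Type*} [Field K] [Infinite K] [AddCommGroup V] [Module K V]
  {s : Finset ι} {l : ι → Dual K V} {p : Submodule K V}

theorem mul_prod_apply_eq_mul_prod_apply_of_forall_notMem {ι' : Type*} {s' : Finset ι'}
    {l' : ι' → Dual K V} {a b : K} (hp : p ≠ ⊤)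
    (h : ∀ v ∉ p, a * ∏ i ∈ s, l i v = b * ∏ i ∈ s', l' i v) (v : V) :
    a * ∏ i ∈ s, l i v = b * ∏ i ∈ s', l' i v := by
  by_cases hv : v ∈ p
  · -- Restrict to a line that meets `p` only at `v`: polynomials agreeing off `t = 0` are equal.
    obtain ⟨u, hu⟩ := SetLike.exists_not_mem_of_ne_top p hp
    obtain ⟨P, hP⟩ := exists_polynomial_eval_eq_prod_apply_add_smul s l v u
    obtain ⟨Q, hQ⟩ := exists_polynomial_eval_eq_prod_apply_add_smul s' l' v u
    have heq_of_ne_zero : ∀ t ≠ 0, (C a * P).eval t = (C b * Q).eval t := fun t ht => by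
      have hline : v + t • u ∉ p := by
        rwa [p.add_mem_iff_right hv, p.smul_mem_iff ht]
      simpa [hP, hQ] using h _ hline
    have heq : C a * P = C b * Q := eq_of_infinite_eval_eq _ _ <|
      (Set.finite_singleton 0).infinite_compl.mono heq_of_ne_zero
    simpa [hP, hQ] using congrArg (eval 0) heq
  · exact h v hv

theorem exists_mem_prod_apply_ne_zero (h : ∀ i ∈ s, ¬ p ≤ (l i).ker) :
    ∃ w ∈ p, ∏ i ∈ s, l i w ≠ 0 := by
  obtain ⟨w, hw, hne⟩ := Dual.exists_forall_mem_ne_zero_of_forall_exists p (fun i : s => l i)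
    fun i => SetLike.not_le_iff_exists.mp (h i i.2)
  exact ⟨w, hw, prod_ne_zero_iff.mpr fun i hi => hne ⟨i, hi⟩⟩

theorem eq_det_pow_of_prod_apply_eq_mul_prod [FiniteDimensional K V] {g : V →ₗ[K] V} {c : K}
    (hp : IsCoatom p) (hg : ∀ w ∈ p, g w = w) (hl : ∀ i ∈ s, l i ≠ 0)
    (hc : ∀ v, ∏ i ∈ s, l i (g v) = c * ∏ i ∈ s, l i v) :
    c = LinearMap.det g ^ #{i ∈ s | (l i).ker = p} := by
  set sP := {i ∈ s | (l i).ker = p}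
  set sQ := {i ∈ s | ¬ (l i).ker = p}
  have hsplit (v : V) : ∏ i ∈ s, l i v = (∏ i ∈ sP, l i v) * ∏ i ∈ sQ, l i v :=
    (prod_filter_mul_prod_filter_not ..).symm
  have hdet (v : V) : ∏ i ∈ sP, l i (g v) = LinearMap.det g ^ #sP * ∏ i ∈ sP, l i v := by
    rw [← prod_const, ← prod_mul_distrib]
    refine prod_congr rfl fun i hi => apply_eq_det_mul_of_fixes_ker ?_ v
    rwa [(mem_filter.mp hi).2]
  have hcancel (v : V) (hv : v ∉ p) :
      LinearMap.det g ^ #sP * ∏ i ∈ sQ, (l i ∘ₗ g) v = c * ∏ i ∈ sQ, l i v := by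
    have hne : ∏ i ∈ sP, l i v ≠ 0 := prod_ne_zero_iff.mpr fun i hi hiv =>
      hv ((mem_filter.mp hi).2 ▸ hiv)
    have hcv := hc v
    rw [hsplit, hsplit, hdet] at hcv
    refine mul_left_cancel₀ hne ?_
    simp only [LinearMap.comp_apply]
    linear_combination hcv
  obtain ⟨w, hw, hwne⟩ : ∃ w ∈ p, ∏ i ∈ sQ, l i w ≠ 0 :=
    exists_mem_prod_apply_ne_zero fun i hi hle =>
      have hi := mem_filter.mp hi
      hi.2 ((le_ker_iff_ker_eq hp (hl i hi.1)).mp hle)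
  have hw_eq := mul_prod_apply_eq_mul_prod_apply_of_forall_notMem hp.ne_top hcancel w
  simp only [LinearMap.comp_apply, hg w hw] at hw_eq
  exact (mul_right_cancel₀ hwne hw_eq).symm

end ProductsOfFunctionals

theorem character_value_at_pseudoreflection_general {K V : Type*} [Field K] [Infinite K]
    [AddCommGroup V] [Module K V] [FiniteDimensional K V] {O : Finset (Submodule K V)}
    (hO : ∀ U ∈ O, finrank K (V ⧸ U) = 1) {ℓ : Submodule K V → (V →ₗ[K] K)}
    (hℓ0 : ∀ U ∈ O, ℓ U ≠ 0) (hℓv : ∀ U ∈ O, ∀ v ∈ U, ℓ U v = 0) {r : V ≃ₗ[K] V} {c : K}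
    (hc : ∀ v, ∏ U ∈ O, ℓ U (r⁻¹ v) = c * ∏ U ∈ O, ℓ U v)
    {Wr : Submodule K V} (hWr : finrank K (V ⧸ Wr) = 1) (hfix : ∀ w ∈ Wr, r w = w) :
    c = if Wr ∈ O then (LinearMap.det (r : V →ₗ[K] V))⁻¹ else 1 := by
  have hker : ∀ U ∈ O, (ℓ U).ker = U := fun U hU =>
    (le_ker_iff_ker_eq (isCoatom_iff_finrank_quotient_eq_one.mpr (hO U hU)) (hℓ0 U hU)).mp
      (hℓv U hU)
  have hfix_inv : ∀ w ∈ Wr, r.symm w = w := fun w hw =>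
    r.symm_apply_eq.mpr (hfix w hw).symm
  have hfilter : {U ∈ O | (ℓ U).ker = Wr} = if Wr ∈ O then {Wr} else ∅ := by
    rw [← filter_eq']
    exact filter_congr fun U hU => by rw [hker U hU]
  have hdet : LinearMap.det (r.symm : V →ₗ[K] V) = (LinearMap.det (r : V →ₗ[K] V))⁻¹ :=
    eq_inv_of_mul_eq_one_left r.det_symm_mul_det
  rw [eq_det_pow_of_prod_apply_eq_mul_prod (isCoatom_iff_finrank_quotient_eq_one.mpr hWr)
    hfix_inv hℓ0 hc, hfilter, hdet]
  split_ifs <;> simp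

/-- Let `V` be a finite-dimensional complex vector space, `H` a finite subgroup of `GL(V)`,
`W` a hyperplane, `f = ∏_{U ∈ H·W} ℓ_U` the product of chosen nonzero linear functionals
vanishing on the hyperplanes of the `H`-orbit of `W`, and `χ : H → ℂˣ` the character with
`h·f = χ(h)·f`. If `r ∈ H` is a pseudoreflection with fixed hyperplane `W_r`, then
`χ(r) = det(r)⁻¹` if `W_r` belongs to the orbit, and `χ(r) = 1` otherwise. -/
theorem character_value_at_pseudoreflection {V : Type*} [AddCommGroup V] [Module ℂ V]
    [FiniteDimensional ℂ V]
    (H : Subgroup (V ≃ₗ[ℂ] V)) [Finite H]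
    (W : Submodule ℂ V) (hW : Module.finrank ℂ (V ⧸ W) = 1)
    (O : Finset (Submodule ℂ V))
    (hO : ∀ U, U ∈ O ↔ ∃ h ∈ H, U = W.map (h : V →ₗ[ℂ] V))
    (ℓ : Submodule ℂ V → (V →ₗ[ℂ] ℂ))
    (hℓ0 : ∀ U ∈ O, ℓ U ≠ 0) (hℓv : ∀ U ∈ O, ∀ v ∈ U, ℓ U v = 0)
    (χ : H →* ℂˣ)
    (hχ : ∀ h : H, ∀ v : V,
      (∏ U ∈ O, ℓ U (((h⁻¹ : H) : V ≃ₗ[ℂ] V) v)) = (χ h : ℂ) * ∏ U ∈ O, ℓ U v)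
    (r : H) (hr : (r : V ≃ₗ[ℂ] V) ≠ 1)
    (Wr : Submodule ℂ V) (hWr : Module.finrank ℂ (V ⧸ Wr) = 1)
    (hfix : ∀ w ∈ Wr, (r : V ≃ₗ[ℂ] V) w = w) :
    (χ r : ℂ) = if Wr ∈ O then (LinearMap.det ((r : V ≃ₗ[ℂ] V) : V →ₗ[ℂ] V))⁻¹ else 1 := by
  refine character_value_at_pseudoreflection_general (fun U hU => ?_) hℓ0 hℓv (hχ r) hWr hfix
  obtain ⟨h, -, rfl⟩ := (hO U).mp hU
  rwa [finrank_quotient_map_equiv]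
end

section
/- Let V be a finite-dimensional complex vector space and H a finite subgroup of GL(V) generated by pseudoreflections, with commutator subgroup H' = [H,H]. Let O_1, …, O_k be the H-orbits of the reflecting hyperplanes of H (the hyperplanes fixed pointwise by some pseudoreflection in H), and for each i let f_i be the product of chosen nonzero linear functionals vanishing on the hyperplanes in O_i. Then the ring of H'-invariant polynomial functions on V is generated as an algebra by the H-invariant polynomial functions together with f_1, …, f_k: ℂ[V]^{H'} = ℂ[V]^{H}[f_1, …, f_k]. -/
/-!
A semi-invariant polynomial `p` of `H` that is not invariant is rescaled nontrivially by a
pseudoreflection, so `p` vanishes on its hyperplane, hence on the whole orbit of this hyperplane,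
and is divisible by the corresponding `f i`. The quotient is a semi-invariant of smaller degree, so
the semi-invariants lie in the algebra generated by the invariants and the `f i`. Averaging over the
characters of `H / H'` writes every `H'`-invariant as a sum of semi-invariants. Conversely, `H`
permutes the factors of `f i` up to scalars, and commutators act trivially on semi-invariants.
-/

open Polynomial
open scoped Pointwise

section SemiInvariant

variable {K G M : Type*}

variable (K G) in
/-- An element that every `g : G` multiplies by a scalar of `K`. No character of `G` is part of the
data, so `0` is semi-invariant. -/
def IsSemiInvariant [SMul K M] [SMul G M] (m : M) : Prop :=
  ∀ g : G, ∃ c : K, g • m = c • m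

theorem IsSemiInvariant.commutator_smul [Group G] [MulAction G M] [CommMonoid K] [MulAction K M]
    [SMulCommClass G K M] {m : M} (hm : IsSemiInvariant K G m) {g : G} (hg : g ∈ commutator G) :
    g • m = m := by
  suffices commutator G ≤ MulAction.stabilizer G m from this hg
  rw [commutator_def, Subgroup.commutator_le]
  intro g _ h _
  obtain ⟨c, hc⟩ := hm g⁻¹
  obtain ⟨d, hd⟩ := hm h⁻¹
  have hcomm : g⁻¹ • h⁻¹ • m = h⁻¹ • g⁻¹ • m := by
    rw [hc, hd, smul_comm, hc, smul_comm h⁻¹, hd, smul_comm]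
  rw [MulAction.mem_stabilizer_iff, commutatorElement_def, mul_smul, mul_smul, mul_smul, hcomm,
    smul_inv_smul, smul_inv_smul]

theorem IsSemiInvariant.of_mul_left {A : Type*} [Field K] [CommRing A] [IsDomain A] [Algebra K A]
    [Group G] [MulSemiringAction G A] {a b : A} (ha : IsSemiInvariant K G a) (ha0 : a ≠ 0)
    (hab : IsSemiInvariant K G (a * b)) : IsSemiInvariant K G b := by
  intro g
  obtain ⟨c, hc⟩ := hab g
  obtain ⟨d, hd⟩ := ha g
  have hd0 : d ≠ 0 := by
    rintro rfl
    exact ha0 ((smul_eq_zero_iff_eq g).mp (by rw [hd, zero_smul]))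
  refine ⟨d⁻¹ * c, ?_⟩
  rw [mul_smul, eq_inv_smul_iff₀ hd0]
  refine mul_left_cancel₀ ha0 ?_
  rw [Algebra.mul_smul_comm, Algebra.mul_smul_comm, ← hc, smul_mul', hd, Algebra.smul_mul_assoc]

end SemiInvariant

section Characters

variable {K A M : Type*} [Field K] [CommGroup A] [HasEnoughRootsOfUnity K (Monoid.exponent A)]

variable (K A) in
theorem natCast_card_ne_zero_of_hasEnoughRootsOfUnity [Finite A] : (Nat.card A : K) ≠ 0 := by
  obtain ⟨ζ, hζ⟩ := HasEnoughRootsOfUnity.exists_primitiveRoot K (Monoid.exponent A)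
  have hexp : (Monoid.exponent A : K) ≠ 0 := hζ.neZero'.out
  intro hcard
  have hdvd := Nat.cast_dvd_cast (α := K) (card_dvd_exponent_pow_rank A)
  rw [hcard, zero_dvd_iff, Nat.cast_pow] at hdvd
  exact hexp (eq_zero_of_pow_eq_zero hdvd)

theorem sum_monoidHom_apply_eq_zero [Finite A] [Fintype (A →* Kˣ)] {a : A} (ha : a ≠ 1) :
    ∑ χ : A →* Kˣ, (χ a : K) = 0 := by
  obtain ⟨χ, hχ⟩ := CommGroup.exists_apply_ne_one_of_hasEnoughRootsOfUnity A K ha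
  exact sum_hom_units_eq_zero ((Units.coeHom K).comp (MonoidHom.eval a)) fun h =>
    hχ (Units.ext (DFunLike.congr_fun h χ))

/-- Fourier inversion at the identity. -/
theorem sum_monoidHom_sum_smul [AddCommGroup M] [Module K M] [Fintype A] [Fintype (A →* Kˣ)]
    (φ : A → M) :
    ∑ χ : A →* Kˣ, ∑ a, (χ a⁻¹ : K) • φ a = (Nat.card A : K) • φ 1 := by
  rw [Finset.sum_comm]
  simp only [← Finset.sum_smul]
  rw [Finset.sum_eq_single 1 (fun a _ ha => by
    rw [sum_monoidHom_apply_eq_zero (inv_ne_one.mpr ha), zero_smul]) (by simp)]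
  rw [← CommGroup.card_monoidHom_of_hasEnoughRootsOfUnity A K]
  simp

end Characters

theorem mem_span_isSemiInvariant_of_commutator_smul_eq {K G M : Type*} [Field K] [Group G]
    [AddCommGroup M] [Module K M] [DistribMulAction G M] [SMulCommClass G K M]
    [Finite (Abelianization G)] [HasEnoughRootsOfUnity K (Monoid.exponent (Abelianization G))]
    {m : M} (hm : ∀ g ∈ commutator G, g • m = m) :
    m ∈ Submodule.span K {x : M | IsSemiInvariant K G x} := by
  have := Fintype.ofFinite (Abelianization G)
  have := Fintype.ofFinite (Abelianization G →* Kˣ)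
  let m' : MulAction.fixedPoints (commutator G) M := ⟨m, fun g => hm g g.2⟩
  let φ (a : Abelianization G) : M := ((show G ⧸ commutator G from a) • m' :)
  have hφ (g : G) (a : Abelianization G) : g • φ a = φ (Abelianization.of g * a) := by
    induction a using QuotientGroup.induction_on with
    | H h => exact (mul_smul g h m).symm
  have hsemi (χ : Abelianization G →* Kˣ) :
      IsSemiInvariant K G (∑ a, (χ a⁻¹ : K) • φ a) := by
    intro g
    refine ⟨χ (Abelianization.of g), ?_⟩
    rw [Finset.smul_sum, Finset.smul_sum]
    refine Fintype.sum_equiv (Equiv.mulLeft (Abelianization.of g)) _ _ fun a => ?_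
    rw [smul_comm, hφ, Equiv.coe_mulLeft, smul_smul, ← Units.val_mul, ← map_mul]
    simp
  have hcard := natCast_card_ne_zero_of_hasEnoughRootsOfUnity K (Abelianization G)
  have hm1 : φ 1 = m := one_smul G m
  rw [← hm1, ← Submodule.smul_mem_iff _ hcard, ← sum_monoidHom_sum_smul]
  exact Submodule.sum_mem _ fun χ _ => Submodule.subset_span (hsemi χ)

theorem prod_dvd_of_prime_of_not_dvd {ι A : Type*} [CommMonoidWithZero A] [IsCancelMulZero A]
    {s : Finset ι} {f : ι → A} {a : A} (hprime : ∀ i ∈ s, Prime (f i))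
    (hndvd : ∀ i ∈ s, ∀ j ∈ s, i ≠ j → ¬ f i ∣ f j) (hdvd : ∀ i ∈ s, f i ∣ a) :
    ∏ i ∈ s, f i ∣ a := by
  classical
  refine Multiset.prod_primes_dvd a (by simpa using hprime) (by simpa using hdvd) fun b => ?_
  rw [Multiset.countP_map, ← Finset.filter_val, Finset.card_val, Finset.card_le_one]
  simp only [Finset.mem_filter]
  rintro i ⟨hi, hbi⟩ j ⟨hj, hbj⟩
  by_contra hij
  exact hndvd i hi j hj hij (hbi.symm.trans hbj).dvd

section Hyperplane

variable {K V : Type*} [Field K] [AddCommGroup V] [Module K V]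

theorem isCoatom_iff_finrank_quotient_eq_one_s8 {W : Submodule K V} :
    IsCoatom W ↔ Module.finrank K (V ⧸ W) = 1 := by
  rw [← isSimpleModule_iff_isCoatom, isSimpleModule_iff_finrank_eq_one]

theorem ker_eq_of_isCoatom_of_le {W : Submodule K V} {φ : V →ₗ[K] K} (hW : IsCoatom W)
    (hφ : φ ≠ 0) (hle : W ≤ LinearMap.ker φ) : LinearMap.ker φ = W :=
  (hW.le_iff.mp hle).resolve_left (LinearMap.ker_eq_top.not.mpr hφ)

theorem exists_eq_smul_of_ker_le_ker {φ ψ : V →ₗ[K] K}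
    (h : LinearMap.ker ψ ≤ LinearMap.ker φ) : ∃ c : K, φ = c • ψ := by
  obtain ⟨c, hc⟩ := Submodule.mem_span_singleton.mp <|
    Set.range_const (ι := Unit) (c := ψ) ▸
      mem_span_of_iInf_ker_le_ker (L := fun _ : Unit => ψ) (by simpa using h)
  exact ⟨c, hc.symm⟩

theorem ker_comp_symm (g : V ≃ₗ[K] V) (φ : V →ₗ[K] K) :
    LinearMap.ker (φ.comp (g.symm : V →ₗ[K] V)) = g • LinearMap.ker φ := by
  rw [LinearMap.ker_comp, ← Submodule.map_equiv_eq_comap_symm]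
  rfl

end Hyperplane

/-- The algebra of polynomial functions on a vector space of any dimension, generated by the linear
functionals inside the algebra of all functions. -/
def polyFunctions (K V : Type*) [Field K] [AddCommGroup V] [Module K V] : Subalgebra K (V → K) :=
  Algebra.adjoin K {q : V → K | ∃ φ : V →ₗ[K] K, q = ⇑φ}

namespace polyFunctions

variable {K V : Type*} [Field K] [AddCommGroup V] [Module K V]

/-- A linear functional as a polynomial function. -/
def linear (φ : V →ₗ[K] K) : polyFunctions K V := ⟨φ, Algebra.subset_adjoin ⟨φ, rfl⟩⟩

@[simp] theorem coe_linear (φ : V →ₗ[K] K) : (linear φ : V → K) = φ := rfl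

/-- The homomorphism `p ↦ p ∘ e`, with values in a subalgebra that contains the `φ ∘ e` for
`φ` linear. -/
def pullback {X : Type*} (e : X → V) (T : Subalgebra K (X → K))
    (hT : ∀ φ : V →ₗ[K] K, ⇑φ ∘ e ∈ T) : polyFunctions K V →ₐ[K] T :=
  let c : (V → K) →ₐ[K] X → K := AlgHom.pi fun x => Pi.evalAlgHom K _ (e x)
  have hle : polyFunctions K V ≤ T.comap c :=
    Algebra.adjoin_le (by rintro _ ⟨φ, rfl⟩; exact hT φ)
  (c.comp (polyFunctions K V).val).codRestrict T fun p => hle p.2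

/-- Substitution of a linear endomorphism into polynomial functions. -/
def precomp (g : V →ₗ[K] V) : polyFunctions K V →ₐ[K] polyFunctions K V :=
  pullback g _ fun φ => (linear (φ.comp g)).2

instance : SMul (V ≃ₗ[K] V) (polyFunctions K V) where
  smul g p := precomp g.symm p

instance : MulSemiringAction (V ≃ₗ[K] V) (polyFunctions K V) where
  one_smul _ := rfl
  mul_smul g h p := by ext v; rfl
  smul_zero g := map_zero (precomp (g.symm : V →ₗ[K] V))
  smul_add g := map_add (precomp (g.symm : V →ₗ[K] V))
  smul_one g := map_one (precomp (g.symm : V →ₗ[K] V))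
  smul_mul g := map_mul (precomp (g.symm : V →ₗ[K] V))

instance : SMulCommClass (V ≃ₗ[K] V) K (polyFunctions K V) where
  smul_comm _ _ _ := rfl

/-- Modulo `φ` the projection `v ↦ v - φ v • e` agrees with the identity on linear functionals,
hence on all polynomial functions. -/
theorem linear_dvd_sub_precomp (φ : V →ₗ[K] K) (e : V) (p : polyFunctions K V) :
    linear φ ∣ p - precomp (LinearMap.id - φ.smulRight e) p := by
  rw [← Ideal.mem_span_singleton, ← Ideal.Quotient.eq]
  let mk := Ideal.Quotient.mkₐ K (Ideal.span {linear φ} : Ideal (polyFunctions K V))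
  have hlinear (ψ : V →ₗ[K] K) :
      mk (linear ψ) = mk (precomp (LinearMap.id - φ.smulRight e) (linear ψ)) := by
    refine Ideal.Quotient.eq.mpr (Ideal.mem_span_singleton.mpr ⟨algebraMap K _ (ψ e), ?_⟩)
    ext v
    change ψ v - ψ (v - φ v • e) = φ v * ψ e
    simp
  suffices mk = mk.comp (precomp (LinearMap.id - φ.smulRight e)) from DFunLike.congr_fun this p
  exact AlgHom.adjoin_ext (by rintro _ ⟨ψ, rfl⟩; exact hlinear ψ)

theorem linear_dvd_iff {φ : V →ₗ[K] K} (hφ : φ ≠ 0) {p : polyFunctions K V} :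
    linear φ ∣ p ↔ ∀ v ∈ LinearMap.ker φ, (p : V → K) v = 0 := by
  refine ⟨?_, fun h => ?_⟩
  · rintro ⟨q, rfl⟩ v (hv : φ v = 0)
    simp [hv]
  · obtain ⟨e, he⟩ := LinearMap.surjective hφ 1
    have hzero : precomp (LinearMap.id - φ.smulRight e) p = 0 :=
      Subtype.ext (funext fun v => h _ (by simp [he]))
    simpa only [hzero, sub_zero] using linear_dvd_sub_precomp φ e p

theorem exists_apply_ne_zero {p : polyFunctions K V} (hp : p ≠ 0) : ∃ a, (p : V → K) a ≠ 0 :=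
  Function.ne_iff.mp fun h => hp (Subtype.ext h)

section Infinite

variable [Infinite K]

/-- The univariate polynomials over an infinite field as functions. -/
noncomputable def evalEquiv : K[X] ≃ₐ[K] (AlgHom.pi fun t : K => aeval (R := K) t).range :=
  AlgEquiv.ofInjective _ fun r s h => Polynomial.funext fun t => by
    simpa [← Polynomial.coe_aeval_eq_eval] using congrFun h t

theorem evalEquiv_apply (r : K[X]) (t : K) : (evalEquiv r : K → K) t = r.eval t :=
  (congrFun (coe_aeval_eq_eval t) r :)

/-- The univariate polynomial describing a polynomial function along the parametrised line
`t ↦ a + t • b`. -/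
noncomputable def lineRestriction (a b : V) : polyFunctions K V →ₐ[K] K[X] :=
  evalEquiv.symm.toAlgHom.comp <| pullback (fun t : K => a + t • b) _ fun φ =>
    ⟨C (φ a) + C (φ b) * X, funext fun t => by simp [mul_comm t]⟩

theorem eval_lineRestriction (a b : V) (p : polyFunctions K V) (t : K) :
    (lineRestriction a b p).eval t = (p : V → K) (a + t • b) := by
  rw [← evalEquiv_apply]
  exact congrFun (congrArg Subtype.val (evalEquiv.apply_symm_apply _)) t

theorem lineRestriction_ne_zero {a b : V} {p : polyFunctions K V} {t : K}
    (hp : (p : V → K) (a + t • b) ≠ 0) : lineRestriction a b p ≠ 0 := by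
  intro h
  rw [← eval_lineRestriction, h, eval_zero] at hp
  exact hp rfl

/-- The line through `a` and `b` reduces the claim to univariate polynomials. -/
theorem exists_mem_mul_apply_ne_zero (W : Submodule K V) {p q : polyFunctions K V} {a b : V}
    (ha : a ∈ W) (hpa : (p : V → K) a ≠ 0) (hb : b ∈ W) (hqb : (q : V → K) b ≠ 0) :
    ∃ w ∈ W, ((p * q : polyFunctions K V) : V → K) w ≠ 0 := by
  have hr : lineRestriction a (b - a) p ≠ 0 := lineRestriction_ne_zero (t := 0) (by simpa)
  have hs : lineRestriction a (b - a) q ≠ 0 := lineRestriction_ne_zero (t := 1) (by simpa)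
  by_contra! h
  refine mul_ne_zero hr hs (Polynomial.funext fun t => ?_)
  rw [← map_mul, eval_lineRestriction, eval_zero]
  exact h _ (W.add_mem ha (W.smul_mem t (W.sub_mem hb ha)))

instance : IsDomain (polyFunctions K V) := by
  have : NoZeroDivisors (polyFunctions K V) := .mk fun {p q} hpq => by
    by_contra! ⟨hp, hq⟩
    obtain ⟨a, ha⟩ := exists_apply_ne_zero hp
    obtain ⟨b, hb⟩ := exists_apply_ne_zero hq
    obtain ⟨w, -, hw⟩ :=
      exists_mem_mul_apply_ne_zero ⊤ Submodule.mem_top ha Submodule.mem_top hb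
    exact hw (by rw [hpq]; rfl)
  exact NoZeroDivisors.to_isDomain _

theorem prime_linear {φ : V →ₗ[K] K} (hφ : φ ≠ 0) : Prime (linear φ) := by
  refine ⟨fun h => hφ (LinearMap.ext fun v => congrFun (congrArg Subtype.val h) v),
    fun h => ?_, fun p q hpq => ?_⟩
  · have := (linear_dvd_iff hφ).mp (h.dvd (a := 1)) 0 (Submodule.zero_mem _)
    exact one_ne_zero this
  · simp only [linear_dvd_iff hφ] at hpq ⊢
    by_contra! ⟨⟨a, ha, hpa⟩, b, hb, hqb⟩
    obtain ⟨w, hw, hpqw⟩ := exists_mem_mul_apply_ne_zero _ ha hpa hb hqb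
    exact hpqw (hpq w hw)

/-- The factor `f` is not constant along the line through `0` and `a`. -/
theorem natDegree_lineRestriction_lt_of_mul {f q : polyFunctions K V} {a : V}
    (hf : (f : V → K) 0 = 0) (ha : ((f * q : polyFunctions K V) : V → K) a ≠ 0) :
    (lineRestriction 0 a q).natDegree < (lineRestriction 0 a (f * q)).natDegree := by
  have hfa : (f : V → K) a ≠ 0 := left_ne_zero_of_mul ha
  have hqa : (q : V → K) a ≠ 0 := right_ne_zero_of_mul ha
  have hdeg : (lineRestriction 0 a f).natDegree ≠ 0 := by
    intro h
    obtain ⟨c, hc⟩ := natDegree_eq_zero.mp h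
    have heval := eval_lineRestriction 0 a f
    simp only [← hc, eval_C] at heval
    exact hfa (by simpa [hf] using (heval 1).symm.trans (heval 0))
  rw [map_mul, natDegree_mul (lineRestriction_ne_zero (t := 1) (by simpa))
    (lineRestriction_ne_zero (t := 1) (by simpa))]
  lia

end Infinite

/-- The product of the linear functionals chosen for the hyperplanes in `S`. -/
def hyperplaneProduct (ℓ : Submodule K V → V →ₗ[K] K) (S : Finset (Submodule K V)) :
    polyFunctions K V :=
  ∏ U ∈ S, linear (ℓ U)

theorem coe_hyperplaneProduct (ℓ : Submodule K V → V →ₗ[K] K) (S : Finset (Submodule K V)) :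
    (hyperplaneProduct ℓ S : V → K) = fun v => ∏ U ∈ S, ℓ U v := by
  ext v
  simp [hyperplaneProduct]

variable {H : Subgroup (V ≃ₗ[K] V)} {ℓ : Submodule K V → V →ₗ[K] K} {S : Finset (Submodule K V)}
  {p : polyFunctions K V}

theorem hyperplaneProduct_apply_zero (hS : S.Nonempty) : (hyperplaneProduct ℓ S : V → K) 0 = 0 := by
  obtain ⟨U, hU⟩ := hS
  rw [coe_hyperplaneProduct]
  exact Finset.prod_eq_zero hU (map_zero _)

theorem hyperplaneProduct_dvd [Infinite K] (hℓ0 : ∀ U ∈ S, ℓ U ≠ 0)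
    (hker : ∀ U ∈ S, LinearMap.ker (ℓ U) = U) (hp : ∀ U ∈ S, ∀ v ∈ U, (p : V → K) v = 0) :
    hyperplaneProduct ℓ S ∣ p := by
  refine prod_dvd_of_prime_of_not_dvd (fun U hU => prime_linear (hℓ0 U hU))
    (fun U hU W hW hne hdvd => hne ?_)
    fun U hU => (linear_dvd_iff (hℓ0 U hU)).mpr (by rw [hker U hU]; exact hp U hU)
  have hle : LinearMap.ker (ℓ U) ≤ LinearMap.ker (ℓ W) := (linear_dvd_iff (hℓ0 U hU)).mp hdvd
  have hcoatom : IsCoatom (LinearMap.ker (ℓ U)) :=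
    LinearMap.isCoatom_ker_of_surjective (LinearMap.surjective (hℓ0 U hU))
  rw [← hker U hU, ← hker W hW, ker_eq_of_isCoatom_of_le hcoatom (hℓ0 W hW) hle]

theorem isSemiInvariant_hyperplaneProduct (hker : ∀ U ∈ S, LinearMap.ker (ℓ U) = U)
    (hS : ∀ h : H, ∀ U, h • U ∈ S ↔ U ∈ S) :
    IsSemiInvariant K H (hyperplaneProduct ℓ S) := by
  intro h
  have hlinear (U) (hU : U ∈ S) : ∃ c : K, h • linear (ℓ U) = c • linear (ℓ (h • U)) := by
    obtain ⟨c, hc⟩ := exists_eq_smul_of_ker_le_ker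
      (φ := (ℓ U).comp ((h : V ≃ₗ[K] V).symm : V →ₗ[K] V)) (ψ := ℓ (h • U))
      (by rw [ker_comp_symm, hker U hU, hker _ ((hS h U).mpr hU)]; rfl)
    exact ⟨c, congrArg linear hc⟩
  choose! c hc using hlinear
  refine ⟨∏ U ∈ S, c U, ?_⟩
  calc h • ∏ U ∈ S, linear (ℓ U) = ∏ U ∈ S, c U • linear (ℓ (h • U)) := by
        rw [Finset.smul_prod']
        exact Finset.prod_congr rfl hc
    _ = (∏ U ∈ S, c U) • ∏ U ∈ S, linear (ℓ (h • U)) := Finset.prod_smul ..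
    _ = (∏ U ∈ S, c U) • ∏ U ∈ S, linear (ℓ U) := by
        congr 1
        exact Finset.prod_equiv (MulAction.toPerm h) (fun U => (hS h U).symm) fun _ _ => rfl

theorem apply_eq_zero_of_smul_ne (hp : IsSemiInvariant K H p) {h : H} (hhp : h • p ≠ p) {w : V}
    (hw : h • w = w) : (p : V → K) w = 0 := by
  obtain ⟨c, hc⟩ := hp h
  have hval : (p : V → K) ((h : V ≃ₗ[K] V).symm w) = c * (p : V → K) w :=
    congrFun (congrArg Subtype.val hc) w
  rw [(LinearEquiv.symm_apply_eq _).mpr hw.symm] at hval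
  refine (mul_eq_zero.mp (?_ : (1 - c) * _ = 0)).resolve_left fun hc1 => hhp ?_
  · linear_combination hval
  · rw [hc, ← sub_eq_zero.mp hc1, one_smul]

theorem apply_smul_eq_zero (hp : IsSemiInvariant K H p) (h : H) {w : V}
    (hw : (p : V → K) w = 0) : (p : V → K) (h • w) = 0 := by
  obtain ⟨c, hc⟩ := hp h⁻¹
  have hval : (p : V → K) (h • w) = c * (p : V → K) w :=
    congrFun (congrArg Subtype.val hc) w
  rw [hval, hw, mul_zero]

theorem mem_adjoin_of_isSemiInvariant [Infinite K] {G ι : Type*} [Group G]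
    [MulSemiringAction G (polyFunctions K V)] [SMulCommClass G K (polyFunctions K V)]
    {F : ι → polyFunctions K V} (hF : ∀ i, IsSemiInvariant K G (F i))
    (hF0 : ∀ i, (F i : V → K) 0 = 0)
    (hdvd : ∀ p, IsSemiInvariant K G p → (∀ g : G, g • p = p) ∨ ∃ i, F i ∣ p)
    (hp : IsSemiInvariant K G p) :
    p ∈ Algebra.adjoin K (FixedPoints.subalgebra K (polyFunctions K V) G ∪ Set.range F) := by
  obtain rfl | hp0 := eq_or_ne p 0
  · exact zero_mem _
  obtain ⟨a, ha⟩ := exists_apply_ne_zero hp0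
  clear hp0
  induction hn : (lineRestriction 0 a p).natDegree using Nat.strong_induction_on generalizing p with
  | _ n ih =>
    obtain hinv | ⟨i, q, rfl⟩ := hdvd p hp
    · exact Algebra.subset_adjoin (Or.inl hinv)
    · have hFi : F i ≠ 0 := by
        intro h
        simp [h] at ha
      exact mul_mem (Algebra.subset_adjoin (Or.inr ⟨i, rfl⟩))
        (ih _ (hn ▸ natDegree_lineRestriction_lt_of_mul (hF0 i) ha) ((hF i).of_mul_left hFi hp)
          (right_ne_zero_of_mul ha) rfl)

theorem forall_smul_eq_or_exists_hyperplaneProduct_dvd [Infinite K] {ι : Type*}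
    {O : ι → Finset (Submodule K V)}
    (hgen : H ≤ Subgroup.closure {g | g ∈ H ∧ ∃ i, ∃ W ∈ O i, ∀ w ∈ W, g w = w})
    (hO : ∀ i, ∃ W, (O i : Set (Submodule K V)) = MulAction.orbit H W)
    (hℓ0 : ∀ i, ∀ U ∈ O i, ℓ U ≠ 0) (hker : ∀ i, ∀ U ∈ O i, LinearMap.ker (ℓ U) = U)
    (hp : IsSemiInvariant K H p) :
    (∀ h : H, h • p = p) ∨ ∃ i, hyperplaneProduct ℓ (O i) ∣ p := by
  by_cases hinv : {g | g ∈ H ∧ ∃ i, ∃ W ∈ O i, ∀ w ∈ W, g w = w} ⊆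
      (MulAction.stabilizer (V ≃ₗ[K] V) p : Set (V ≃ₗ[K] V))
  · exact Or.inl fun h => (hgen.trans ((Subgroup.closure_le _).mpr hinv)) h.2
  obtain ⟨g, ⟨hgH, i, W, hW, hgW⟩, hgp⟩ := Set.not_subset.mp hinv
  have hpW (w) (hw : w ∈ W) : (p : V → K) w = 0 :=
    apply_eq_zero_of_smul_ne hp (h := ⟨g, hgH⟩) hgp (hgW w hw)
  refine Or.inr ⟨i, hyperplaneProduct_dvd (hℓ0 i) (hker i) fun U hU v hv => ?_⟩
  obtain ⟨W₀, hW₀⟩ := hO i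
  rw [← Finset.mem_coe, hW₀] at hU hW
  rw [← MulAction.orbit_eq_iff.mpr hW] at hU
  obtain ⟨h, rfl⟩ := hU
  obtain ⟨w, hw, rfl⟩ := hv
  exact apply_smul_eq_zero hp h (hpW w hw)

theorem fixedPoints_commutator_eq_adjoin [Infinite K] {ι : Type*} [Finite (Abelianization H)]
    [HasEnoughRootsOfUnity K (Monoid.exponent (Abelianization H))]
    {O : ι → Finset (Submodule K V)}
    (hgen : H ≤ Subgroup.closure {g | g ∈ H ∧ ∃ i, ∃ W ∈ O i, ∀ w ∈ W, g w = w})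
    (hO : ∀ i, ∃ W, (O i : Set (Submodule K V)) = MulAction.orbit H W)
    (hℓ0 : ∀ i, ∀ U ∈ O i, ℓ U ≠ 0) (hker : ∀ i, ∀ U ∈ O i, LinearMap.ker (ℓ U) = U) :
    FixedPoints.subalgebra K (polyFunctions K V) ↥⁅H, H⁆ =
      Algebra.adjoin K (FixedPoints.subalgebra K (polyFunctions K V) H ∪
        Set.range fun i => hyperplaneProduct ℓ (O i)) := by
  have hsemi (i) : IsSemiInvariant K H (hyperplaneProduct ℓ (O i)) := by
    obtain ⟨W, hW⟩ := hO i
    refine isSemiInvariant_hyperplaneProduct (hker i) fun h U => ?_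
    rw [← Finset.mem_coe, ← Finset.mem_coe, hW, ← MulAction.orbit_eq_iff, MulAction.orbit_smul,
      MulAction.orbit_eq_iff]
  have hzero (i) : (hyperplaneProduct ℓ (O i) : V → K) 0 = 0 := by
    obtain ⟨W, hW⟩ := hO i
    refine hyperplaneProduct_apply_zero ⟨W, ?_⟩
    rw [← Finset.mem_coe, hW]
    exact MulAction.mem_orbit_self W
  refine le_antisymm (fun p hp => ?_) (Algebra.adjoin_le ?_)
  · have hinv (g : H) (hg : g ∈ commutator H) : g • p = p :=
      hp ⟨g, H.map_subtype_commutator ▸ Subgroup.mem_map_of_mem H.subtype hg⟩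
    change p ∈ Subalgebra.toSubmodule (Algebra.adjoin K _)
    refine Submodule.span_le.mpr (fun q hq => ?_)
      (mem_span_isSemiInvariant_of_commutator_smul_eq hinv)
    exact mem_adjoin_of_isSemiInvariant hsemi hzero
      (fun _ => forall_smul_eq_or_exists_hyperplaneProduct_dvd hgen hO hℓ0 hker) hq
  · rintro p (hp | ⟨i, rfl⟩) ⟨h, hh⟩
    · exact hp ⟨h, H.commutator_le_self hh⟩
    · obtain ⟨h', hh', rfl⟩ := H.map_subtype_commutator.ge hh
      exact (hsemi i).commutator_smul hh'

theorem coe_map_val_fixedPoints (Γ : Subgroup (V ≃ₗ[K] V)) :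
    ((FixedPoints.subalgebra K (polyFunctions K V) Γ).map (polyFunctions K V).val : Set (V → K)) =
      {p | p ∈ polyFunctions K V ∧ ∀ g ∈ Γ, ∀ v, p (g v) = p v} := by
  ext p
  constructor
  · rintro ⟨p, hp, rfl⟩
    exact ⟨p.2, fun g hg v => congrFun (congrArg Subtype.val (hp ⟨g, hg⟩⁻¹)) v⟩
  · rintro ⟨hp, hinv⟩
    exact ⟨⟨p, hp⟩, fun g => Subtype.ext (funext fun v => hinv _ (Γ.inv_mem g.2) v), rfl⟩

end polyFunctions

open polyFunctions

theorem commutator_invariants_generated_by_invariants_and_orbit_products_general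
    {K V ι : Type*} [Field K] [Infinite K] [AddCommGroup V] [Module K V]
    (H : Subgroup (V ≃ₗ[K] V)) [Finite (Abelianization H)]
    [HasEnoughRootsOfUnity K (Monoid.exponent (Abelianization H))]
    (hgen : H = Subgroup.closure {g : V ≃ₗ[K] V | g ∈ H ∧ g ≠ 1 ∧
      ∃ W : Submodule K V, Module.finrank K (V ⧸ W) = 1 ∧ ∀ w ∈ W, g w = w})
    (O : ι → Finset (Submodule K V))
    (hOorb : ∀ i, ∃ W : Submodule K V, Module.finrank K (V ⧸ W) = 1 ∧
      ∀ U, U ∈ O i ↔ ∃ h ∈ H, U = W.map (h : V →ₗ[K] V))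
    (hcover : ∀ U : Submodule K V, Module.finrank K (V ⧸ U) = 1 →
      (∃ g ∈ H, g ≠ 1 ∧ ∀ w ∈ U, g w = w) → ∃ i, U ∈ O i)
    (ℓ : Submodule K V → (V →ₗ[K] K))
    (hℓ0 : ∀ i, ∀ U ∈ O i, ℓ U ≠ 0)
    (hℓv : ∀ i, ∀ U ∈ O i, ∀ v ∈ U, ℓ U v = 0)
    (f : ι → (V → K)) (hf : ∀ i, f i = fun v => ∏ U ∈ O i, ℓ U v) :
    {p : V → K | p ∈ Algebra.adjoin K {q : V → K | ∃ φ : V →ₗ[K] K, q = ⇑φ} ∧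
        ∀ g ∈ ⁅H, H⁆, ∀ v : V, p (g v) = p v} =
      ↑(Algebra.adjoin K
        ({p : V → K | p ∈ Algebra.adjoin K {q : V → K | ∃ φ : V →ₗ[K] K, q = ⇑φ} ∧
            ∀ g ∈ H, ∀ v : V, p (g v) = p v} ∪ Set.range f)) := by
  have hcoatom (i) (U) (hU : U ∈ O i) : IsCoatom U := by
    obtain ⟨W, hW, hmem⟩ := hOorb i
    obtain ⟨h, -, rfl⟩ := (hmem U).mp hU
    exact (OrderIso.isCoatom_iff (Submodule.orderIsoMapComap h) W).mpr
      (isCoatom_iff_finrank_quotient_eq_one_s8.mpr hW)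
  have hker (i) (U) (hU : U ∈ O i) : LinearMap.ker (ℓ U) = U :=
    ker_eq_of_isCoatom_of_le (hcoatom i U hU) (hℓ0 i U hU) (hℓv i U hU)
  have hO (i) : ∃ W, (O i : Set (Submodule K V)) = MulAction.orbit H W := by
    obtain ⟨W, -, hmem⟩ := hOorb i
    refine ⟨W, Set.ext fun U => (hmem U).trans ?_⟩
    exact ⟨fun ⟨h, hh, hU⟩ => ⟨⟨h, hh⟩, hU.symm⟩, fun ⟨h, hU⟩ => ⟨h, h.2, hU.symm⟩⟩
  have hrefl : H ≤ Subgroup.closure {g | g ∈ H ∧ ∃ i, ∃ W ∈ O i, ∀ w ∈ W, g w = w} := by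
    refine hgen.le.trans (Subgroup.closure_mono ?_)
    rintro g ⟨hg, hg1, W, hW, hgW⟩
    obtain ⟨i, hi⟩ := hcover W hW ⟨g, hg, hg1, hgW⟩
    exact ⟨hg, i, W, hi, hgW⟩
  have hfval : Set.range f =
      (polyFunctions K V).val '' Set.range fun i => hyperplaneProduct ℓ (O i) := by
    rw [← Set.range_comp]
    exact congrArg Set.range (funext fun i => (hf i).trans (coe_hyperplaneProduct ℓ (O i)).symm)
  have hmap := congrArg (Subalgebra.map (polyFunctions K V).val)
    (fixedPoints_commutator_eq_adjoin hrefl hO hℓ0 hker)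
  rw [AlgHom.map_adjoin, Set.image_union, ← hfval, ← Subalgebra.coe_map,
    coe_map_val_fixedPoints] at hmap
  exact (coe_map_val_fixedPoints _).symm.trans (congrArg _ hmap)

/-- Let `V` be a finite-dimensional complex vector space and `H` a finite subgroup of `GL(V)`
generated by pseudoreflections, with commutator subgroup `H' = [H,H]`. Let `O_1, …, O_k` be
the `H`-orbits of the reflecting hyperplanes of `H`, and `f_i` the product of chosen nonzero
linear functionals vanishing on the hyperplanes in `O_i`. Then the ring of `H'`-invariant
polynomial functions on `V` is generated as an algebra by the `H`-invariant polynomial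
functions together with `f_1, …, f_k`. -/
theorem commutator_invariants_generated_by_invariants_and_orbit_products
    {V : Type*} [AddCommGroup V] [Module ℂ V] [FiniteDimensional ℂ V]
    (H : Subgroup (V ≃ₗ[ℂ] V)) [Finite H]
    (hgen : H = Subgroup.closure {g : V ≃ₗ[ℂ] V | g ∈ H ∧ g ≠ 1 ∧
      ∃ W : Submodule ℂ V, Module.finrank ℂ (V ⧸ W) = 1 ∧ ∀ w ∈ W, g w = w})
    (k : ℕ) (O : Fin k → Finset (Submodule ℂ V))
    -- each `O i` is the `H`-orbit of some reflecting hyperplane of `H`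
    (hOorb : ∀ i, ∃ W : Submodule ℂ V,
      (Module.finrank ℂ (V ⧸ W) = 1 ∧ ∃ g ∈ H, g ≠ 1 ∧ ∀ w ∈ W, g w = w) ∧
      ∀ U, U ∈ O i ↔ ∃ h ∈ H, U = W.map (h : V →ₗ[ℂ] V))
    -- the `O i` exhaust the reflecting hyperplanes, and are pairwise distinct orbits
    (hcover : ∀ U : Submodule ℂ V, Module.finrank ℂ (V ⧸ U) = 1 →
      (∃ g ∈ H, g ≠ 1 ∧ ∀ w ∈ U, g w = w) → ∃ i, U ∈ O i)
    (hdistinct : Function.Injective O)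
    (ℓ : Submodule ℂ V → (V →ₗ[ℂ] ℂ))
    (hℓ0 : ∀ i, ∀ U ∈ O i, ℓ U ≠ 0)
    (hℓv : ∀ i, ∀ U ∈ O i, ∀ v ∈ U, ℓ U v = 0)
    (f : Fin k → (V → ℂ)) (hf : ∀ i, f i = fun v => ∏ U ∈ O i, ℓ U v) :
    {p : V → ℂ | p ∈ Algebra.adjoin ℂ {q : V → ℂ | ∃ φ : V →ₗ[ℂ] ℂ, q = ⇑φ} ∧
        ∀ g ∈ ⁅H, H⁆, ∀ v : V, p (g v) = p v} =
      ↑(Algebra.adjoin ℂ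
        ({p : V → ℂ | p ∈ Algebra.adjoin ℂ {q : V → ℂ | ∃ φ : V →ₗ[ℂ] ℂ, q = ⇑φ} ∧
            ∀ g ∈ H, ∀ v : V, p (g v) = p v} ∪ Set.range f)) :=
  have := Quotient.finite (QuotientGroup.leftRel (commutator H))
  commutator_invariants_generated_by_invariants_and_orbit_products_general H hgen O
    (fun i => let ⟨W, hW, hO⟩ := hOorb i; ⟨W, hW.1, hO⟩) hcover ℓ hℓ0 hℓv f hf
end

section
/- Let V be a finite-dimensional complex vector space and H a finite subgroup of GL(V) generated by pseudoreflections. Let O_1, …, O_k be the H-orbits of the reflecting hyperplanes of H, choose a hyperplane W_i ∈ O_i for each i, and let e_i be the order of the pointwise stabilizer {h ∈ H : h fixes W_i pointwise}. Then the abelianization H/[H,H] is isomorphic to the product of cyclic groups ℤ/e_1ℤ × ⋯ × ℤ/e_kℤ. -/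
/-!
For a hyperplane `U` of a linear representation of a finite group `G`, the stabilizer of `U` acts on
the line `V ⧸ U` by a character, which can be transferred to `G`. An element fixing a hyperplane `P`
pointwise acts trivially on `V ⧸ U'` for each `U' ≠ P` that it stabilizes, so the transferred
character is trivial on the pointwise stabilizer of `P` when `P` is outside the orbit of `U`. On the
pointwise stabilizer of `U` it is the action on `V ⧸ U`, which is faithful because there are no
transvections of order invertible in the field. Such characters separate the pointwise stabilizers
of orbit representatives, and these generate the abelianization because conjugates become equal
there.
-/

open MulAction
open scoped Pointwise

section Transfer

open MonoidHom

variable {G A : Type*} [Group G] [CommGroup A] {N : Subgroup G} [N.FiniteIndex] (θ : N →* A) {g : G}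

theorem transfer_eq_one_of_conj_pow
    (h : ∀ (q : G) (n : ℕ) (hq : q⁻¹ * g ^ n * q ∈ N), θ ⟨_, hq⟩ = 1) : transfer θ g = 1 := by
  let := Fintype.ofFinite (Quotient (orbitRel (Subgroup.zpowers g) (G ⧸ N)))
  rw [transfer_eq_prod_quotient_orbitRel_zpowers_quot]
  exact Finset.prod_eq_one fun _ _ => h _ _ _

theorem transfer_eq_apply_of_conj_pow (hg : g ∈ N)
    (h : ∀ q ∉ N, ∀ (n : ℕ) (hq : q⁻¹ * g ^ n * q ∈ N), θ ⟨_, hq⟩ = 1) :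
    transfer θ g = θ ⟨g, hg⟩ := by
  let := Fintype.ofFinite (Quotient (orbitRel (Subgroup.zpowers g) (G ⧸ N)))
  let base : Quotient (orbitRel (Subgroup.zpowers g) (G ⧸ N)) := ⟦((1 : G) : G ⧸ N)⟧
  have hfixed : g • ((1 : G) : G ⧸ N) = (1 : G) := by
    simpa [MulAction.Quotient.smul_coe, QuotientGroup.eq] using hg
  have hbase_out : base.out = ((1 : G) : G ⧸ N) := by
    obtain ⟨⟨_, k, rfl⟩, hk⟩ := (orbitRel_apply (G := Subgroup.zpowers g)).1
      (Quotient.mk_out (s := orbitRel (Subgroup.zpowers g) (G ⧸ N)) ((1 : G) : G ⧸ N))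
    exact hk.symm.trans (zpow_mem (show g ∈ stabilizer G ((1 : G) : G ⧸ N) from hfixed) k)
  have hperiod : Function.minimalPeriod (g • ·) base.out = 1 := by
    rw [hbase_out]
    exact Function.minimalPeriod_eq_one_iff_isFixedPt.2 hfixed
  have hout_mem (x : G ⧸ N) : x.out ∈ N ↔ ((1 : G) : G ⧸ N) = x := by
    simpa only [QuotientGroup.out_eq', inv_one, one_mul] using
      (QuotientGroup.eq (s := N) (a := 1) (b := x.out)).symm
  have hconj : ∀ q ∈ N, ∀ n, n = 1 → ∀ hq : q⁻¹ * g ^ n * q ∈ N, θ ⟨_, hq⟩ = θ ⟨g, hg⟩ := by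
    rintro q hqN _ rfl hq
    calc θ ⟨_, hq⟩ = θ (⟨q, hqN⟩⁻¹ * ⟨g, hg⟩ * ⟨q, hqN⟩) := by
          congr 1
          simp [Subtype.ext_iff]
      _ = θ ⟨g, hg⟩ := by rw [map_mul, map_mul, map_inv, mul_right_comm, inv_mul_cancel, one_mul]
  rw [transfer_eq_prod_quotient_orbitRel_zpowers_quot, Finset.prod_eq_single base]
  · exact hconj _ ((hout_mem _).2 hbase_out.symm) _ hperiod _
  · refine fun q _ hq => h _ (fun hqN => hq ?_) _ _
    rw [← Quotient.out_eq q, ← (hout_mem _).1 hqN]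
  · exact fun hbase => absurd (Finset.mem_univ _) hbase

end Transfer

section Abelianization

variable {G : Type*} [Group G]

theorem nonempty_abelianization_mulEquiv_pi {ι : Type*} [Finite ι] {A : ι → Type*}
    [∀ i, CommGroup (A i)] (C : ι → Subgroup G) (χ : ∀ i, G →* A i)
    (hdisjoint : ∀ i, Disjoint (χ i).ker (C i)) (hle : Pairwise fun i j => C j ≤ (χ i).ker)
    (hgen : Subgroup.normalClosure (⋃ i, (C i : Set G)) = ⊤) :
    Nonempty (Abelianization G ≃* ∀ i, C i) := by
  classical
  let := Fintype.ofFinite ι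
  let Φ : (∀ i, C i) →* Abelianization G :=
    MonoidHom.noncommPiCoprod (fun i => Abelianization.of.comp (C i).subtype)
      fun _ _ _ _ _ => Commute.all _ _
  have hΦ (i : ι) (x : C i) : Φ (Pi.mulSingle i x) = Abelianization.of (x : G) :=
    MonoidHom.noncommPiCoprod_mulSingle _ _ _
  have hcoord (i : ι) (c : ∀ i, C i) : Abelianization.lift (χ i) (Φ c) = χ i (c i) := by
    suffices (Abelianization.lift (χ i)).comp Φ =
        ((χ i).comp (C i).subtype).comp (Pi.evalMonoidHom _ i) from DFunLike.congr_fun this c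
    refine MonoidHom.pi_ext fun j x => ?_
    rcases eq_or_ne j i with rfl | hji
    · simp [hΦ]
    · simpa [hΦ, hji.symm] using hle hji.symm x.2
  have hinj : Function.Injective Φ := by
    refine (injective_iff_map_eq_one Φ).2 fun c hc => funext fun i => Subtype.ext ?_
    refine Subgroup.disjoint_def.1 (hdisjoint i) ?_ (c i).2
    rw [MonoidHom.mem_ker, ← hcoord, hc, map_one]
  have hsurj : Function.Surjective Φ := by
    have hcomap : Φ.range.comap Abelianization.of = ⊤ := by
      refine top_le_iff.1 (hgen.ge.trans (Subgroup.normalClosure_le_normal ?_))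
      exact Set.iUnion_subset fun i x hx => ⟨Pi.mulSingle i ⟨x, hx⟩, hΦ i ⟨x, hx⟩⟩
    intro x
    obtain ⟨g, rfl⟩ := QuotientGroup.mk_surjective x
    exact hcomap.ge (Subgroup.mem_top g)
  exact ⟨(MulEquiv.ofBijective Φ ⟨hinj, hsurj⟩).symm⟩

theorem isCyclic_of_disjoint_ker {R : Type*} [CommRing R] [IsDomain R] (χ : G →* Rˣ)
    (C : Subgroup G) [Finite C] (h : Disjoint χ.ker C) : IsCyclic C := by
  refine isCyclic_of_injective_ringHom (((Units.coeHom R).comp χ).comp C.subtype) ?_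
  refine (injective_iff_map_eq_one _).2 fun c hc => Subtype.ext ?_
  exact Subgroup.disjoint_def.1 h (Units.ext hc) c.2

end Abelianization

theorem pow_smul_eq_add_nsmul {M A : Type*} [Monoid M] [AddCommGroup A] [DistribMulAction M A]
    {g : M} {a : A} (h : g • (g • a - a) = g • a - a) (n : ℕ) :
    g ^ n • a = a + n • (g • a - a) := by
  induction n with
  | zero => simp
  | succ n ih =>
    rw [pow_succ', mul_smul, ih, smul_add, smul_comm g n, h, succ_nsmul]
    abel

theorem eq_one_of_forall_smul_sub_mem (K : Type*) {G V : Type*} [Field K] [Group G]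
    [NeZero (Nat.card G : K)] [AddCommGroup V] [Module K V] [DistribMulAction G V]
    [FaithfulSMul G V] {U : Set V} {g : G} (hfix : g ∈ fixingSubgroup G U)
    (hsub : ∀ v : V, g • v - v ∈ U) : g = 1 := by
  refine FaithfulSMul.eq_of_smul_eq_smul (α := V) fun v => ?_
  have hpow := pow_smul_eq_add_nsmul ((mem_fixingSubgroup_iff G).1 hfix _ (hsub v)) (Nat.card G)
  rw [pow_card_eq_one', one_smul, left_eq_add, ← Nat.cast_smul_eq_nsmul K, smul_eq_zero] at hpow
  rw [one_smul]
  exact sub_eq_zero.1 (hpow.resolve_left (NeZero.ne _))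

section LinearAction

variable {R G V : Type*} [CommRing R] [Group G] [AddCommGroup V] [Module R V]
  [DistribMulAction G V] [SMulCommClass G R V] {P U : Submodule R V}

theorem isCoatom_smul (g : G) (hU : IsCoatom U) : IsCoatom (g • U) :=
  ((Submodule.orderIsoMapComap (DistribMulAction.toLinearEquiv R V g)).isCoatom_iff U).2 hU

theorem fixingSubgroup_le_stabilizer_submodule (U : Submodule R V) :
    fixingSubgroup G (U : Set V) ≤ stabilizer G U :=
  (fixingSubgroup_le_stabilizer G (U : Set V)).trans_eq Submodule.stabilizer_coe.symm

/-- The determinant of the action of the stabilizer of `U` on `V ⧸ U`. For a hyperplane `U` this is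
the scalar by which the stabilizer acts on the line `V ⧸ U`. -/
noncomputable def quotientDet (U : Submodule R V) : stabilizer G U →* Rˣ :=
  LinearEquiv.det.comp <| (LinearEquiv.reduce U).comp <|
    (DistribMulAction.toModuleAut R V).subgroupComap (stabilizer (V ≃ₗ[R] V) U)

theorem quotientDet_eq_one_of_codisjoint (h : Codisjoint U P) {g : G} (hgU : g ∈ stabilizer G U)
    (hgP : g ∈ fixingSubgroup G (P : Set V)) : quotientDet U ⟨g, hgU⟩ = 1 := by
  have hreduce : LinearEquiv.reduce U
      ⟨DistribMulAction.toModuleAut R V g, hgU⟩ = 1 := by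
    ext x
    obtain ⟨p, hp, rfl⟩ : x ∈ P.map U.mkQ := by
      rw [(Submodule.map_mkQ_eq_top U P).2 h.eq_top]
      exact Submodule.mem_top
    exact congrArg U.mkQ ((mem_fixingSubgroup_iff G).1 hgP p hp)
  exact (congrArg LinearEquiv.det hreduce).trans (map_one _)

theorem quotientDet_conj_pow_eq_one (hU : IsCoatom U) (hP : IsCoatom P) {g q : G}
    (hg : g ∈ fixingSubgroup G (P : Set V)) (hq : q • U ≠ P) (n : ℕ)
    (hmem : q⁻¹ * g ^ n * q ∈ stabilizer G U) : quotientDet U ⟨_, hmem⟩ = 1 := by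
  have hne : U ≠ q⁻¹ • P := fun h => hq (eq_inv_smul_iff.1 h)
  refine quotientDet_eq_one_of_codisjoint (hU.codisjoint_of_ne (isCoatom_smul q⁻¹ hP) hne) hmem ?_
  simpa using Set.conj_mem_fixingSubgroup (Submodule.coe_pointwise_smul q⁻¹ P).symm
    (pow_mem hg n)

/-- The character of `G` obtained from `quotientDet U` by transfer. For a hyperplane `U` it is the
inverse of the character by which `G` acts on the product of linear forms defining the hyperplanes
in the orbit of `U`. -/
noncomputable def orbitCharacter (G : Type*) [Group G] [DistribMulAction G V] [SMulCommClass G R V]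
    (U : Submodule R V) [(stabilizer G U).FiniteIndex] : G →* Rˣ :=
  MonoidHom.transfer (quotientDet U)

variable [(stabilizer G U).FiniteIndex]

theorem fixingSubgroup_le_ker_orbitCharacter (hU : IsCoatom U) (hP : IsCoatom P)
    (h : P ∉ orbit G U) : fixingSubgroup G (P : Set V) ≤ (orbitCharacter G U).ker :=
  fun _ hg => transfer_eq_one_of_conj_pow _ fun q n hmem =>
    quotientDet_conj_pow_eq_one hU hP hg (fun hq => h ⟨q, hq⟩) n hmem

theorem orbitCharacter_apply_of_mem_fixingSubgroup (hU : IsCoatom U) {g : G}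
    (hg : g ∈ fixingSubgroup G (U : Set V)) :
    orbitCharacter G U g = quotientDet U ⟨g, fixingSubgroup_le_stabilizer_submodule U hg⟩ :=
  transfer_eq_apply_of_conj_pow _ _ fun _ hq n hmem =>
    quotientDet_conj_pow_eq_one hU hU hg hq n hmem

end LinearAction

section Hyperplane

variable {K G V : Type*} [Field K] [Group G] [AddCommGroup V] [Module K V]
  [DistribMulAction G V] [SMulCommClass G K V] {U : Submodule K V}

theorem isCoatom_of_finrank_quotient_eq_one (hU : Module.finrank K (V ⧸ U) = 1) : IsCoatom U :=
  isSimpleModule_iff_isCoatom.1 (isSimpleModule_iff_finrank_eq_one.2 hU)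

theorem smul_sub_mem_of_quotientDet_eq_one (hU : Module.finrank K (V ⧸ U) = 1)
    {g : stabilizer G U} (hg : quotientDet U g = 1) (v : V) : (g : G) • v - v ∈ U := by
  let r : (V ⧸ U) ≃ₗ[K] V ⧸ U :=
    LinearEquiv.reduce U ⟨DistribMulAction.toModuleAut K V (g : G), g.2⟩
  obtain ⟨c, hc, -⟩ :=
    LinearMap.existsUnique_eq_smul_id_of_finrank_eq_one hU (r : (V ⧸ U) →ₗ[K] V ⧸ U)
  have hc_one : c = 1 := by
    have hdet : LinearMap.det (r : (V ⧸ U) →ₗ[K] V ⧸ U) = 1 :=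
      (LinearEquiv.coe_det r).symm.trans (congrArg Units.val hg)
    simpa [hc, hU] using hdet
  have hr : r (U.mkQ v) = U.mkQ v := by
    simpa [hc_one] using LinearMap.congr_fun hc (U.mkQ v)
  exact (Submodule.Quotient.eq U).1 hr

variable [FaithfulSMul G V] [NeZero (Nat.card G : K)]

theorem disjoint_ker_orbitCharacter_fixingSubgroup [(stabilizer G U).FiniteIndex]
    (hU : Module.finrank K (V ⧸ U) = 1) :
    Disjoint (orbitCharacter G U).ker (fixingSubgroup G (U : Set V)) := by
  refine Subgroup.disjoint_def.2 fun {g} hker hfix => eq_one_of_forall_smul_sub_mem K hfix ?_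
  rw [MonoidHom.mem_ker, orbitCharacter_apply_of_mem_fixingSubgroup
    (isCoatom_of_finrank_quotient_eq_one hU) hfix] at hker
  exact smul_sub_mem_of_quotientDet_eq_one hU hker

theorem nonempty_abelianization_mulEquiv_pi_zmod {ι : Type*} [Finite ι] (W : ι → Submodule K V)
    (hW : ∀ i, Module.finrank K (V ⧸ W i) = 1) (horbit : Pairwise fun i j => W j ∉ orbit G (W i))
    (hgen : Subgroup.normalClosure (⋃ i, (fixingSubgroup G (W i : Set V) : Set G)) = ⊤) :
    Nonempty (Abelianization G ≃*
      ∀ i, Multiplicative (ZMod (Nat.card (fixingSubgroup G (W i : Set V))))) := by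
  have : Finite G := Nat.finite_of_card_ne_zero fun h => NeZero.ne (Nat.card G : K) (by simp [h])
  have hcoatom (i : ι) : IsCoatom (W i) := isCoatom_of_finrank_quotient_eq_one (hW i)
  have hdisjoint (i : ι) := disjoint_ker_orbitCharacter_fixingSubgroup (G := G) (hW i)
  have hcyclic (i : ι) : IsCyclic (fixingSubgroup G (W i : Set V)) :=
    isCyclic_of_disjoint_ker _ _ (hdisjoint i)
  obtain ⟨Φ⟩ := nonempty_abelianization_mulEquiv_pi _ _ hdisjoint
    (fun i j hij => fixingSubgroup_le_ker_orbitCharacter (hcoatom i) (hcoatom j) (horbit hij)) hgen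
  exact ⟨Φ.trans (MulEquiv.piCongrRight fun i => (zmodCyclicMulEquiv (hcyclic i)).symm)⟩

end Hyperplane

section ReflectionGroup

variable {K V : Type*} [Field K] [AddCommGroup V] [Module K V]

/-- Pseudoreflections of a vector space. Finiteness of the order is left out, since it is automatic
in the finite groups considered here. -/
def IsPseudoreflection (g : V ≃ₗ[K] V) : Prop :=
  g ≠ 1 ∧ ∃ U : Submodule K V, Module.finrank K (V ⧸ U) = 1 ∧ ∀ w ∈ U, g w = w

/-- Reflecting hyperplanes of a linear group: those fixed pointwise by a pseudoreflection in it. -/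
def IsReflectingHyperplane (H : Subgroup (V ≃ₗ[K] V)) (U : Submodule K V) : Prop :=
  Module.finrank K (V ⧸ U) = 1 ∧ ∃ g ∈ H, g ≠ 1 ∧ ∀ w ∈ U, g w = w

theorem normalClosure_iUnion_fixingSubgroup_eq_top {H : Subgroup (V ≃ₗ[K] V)} {ι : Type*}
    {W : ι → Submodule K V} (hgen : H = Subgroup.closure {g | g ∈ H ∧ IsPseudoreflection g})
    (horbits : ∀ U, IsReflectingHyperplane H U → ∃ i, U ∈ orbit H (W i)) :
    Subgroup.normalClosure (⋃ i, (fixingSubgroup H (W i : Set V) : Set H)) = ⊤ := by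
  set N := Subgroup.normalClosure (⋃ i, (fixingSubgroup H (W i : Set V) : Set H))
  have hreflection (g : H) (hg : IsPseudoreflection (g : V ≃ₗ[K] V)) : g ∈ N := by
    obtain ⟨hne, U, hU, hfix⟩ := hg
    obtain ⟨i, h, rfl⟩ := horbits U ⟨hU, g, g.2, hne, hfix⟩
    have hmem : g ∈ (fixingSubgroup H (W i : Set V)).map (MulAut.conj h).toMonoidHom := by
      rw [← SubMulAction.fixingSubgroup_smul_eq_fixingSubgroup_map_conj]
      exact (mem_fixingSubgroup_iff H).2 hfix
    obtain ⟨r, hr, rfl⟩ := hmem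
    exact Subgroup.Normal.conj_mem inferInstance r
      (Subgroup.subset_normalClosure (Set.mem_iUnion_of_mem i hr)) h
  have hle : H ≤ N.map H.subtype :=
    hgen.le.trans <| (Subgroup.closure_le _).2 fun g hg => ⟨⟨g, hg.1⟩, hreflection _ hg.2, rfl⟩
  refine eq_top_iff.2 fun g _ => ?_
  obtain ⟨g', hg', hval⟩ := hle g.2
  exact Subtype.ext hval ▸ hg'

theorem abelianization_of_reflection_group_general (H : Subgroup (V ≃ₗ[K] V))
    [NeZero (Nat.card H : K)]
    (hgen : H = Subgroup.closure {g | g ∈ H ∧ IsPseudoreflection g})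
    {ι : Type*} [Finite ι] (W : ι → Submodule K V) (hW : ∀ i, IsReflectingHyperplane H (W i))
    (horbits : ∀ U, IsReflectingHyperplane H U →
      ∃! i, ∃ h ∈ H, U = (W i).map (h : V →ₗ[K] V))
    (e : ι → ℕ) (he : ∀ i, e i = Nat.card {h : H // ∀ w ∈ W i, (h : V ≃ₗ[K] V) w = w}) :
    Nonempty (Abelianization H ≃* ∀ i, Multiplicative (ZMod (e i))) := by
  have hmem_orbit (U : Submodule K V) (i : ι) :
      U ∈ orbit H (W i) ↔ ∃ h ∈ H, U = (W i).map (h : V →ₗ[K] V) :=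
    ⟨fun ⟨h, hU⟩ => ⟨h, h.2, hU.symm⟩, fun ⟨h, hh, hU⟩ => ⟨⟨h, hh⟩, hU.symm⟩⟩
  obtain rfl : e = fun i => Nat.card (fixingSubgroup H (W i : Set V)) := funext fun i =>
    (he i).trans (Nat.card_congr (Equiv.subtypeEquivRight fun _ => (mem_fixingSubgroup_iff H).symm))
  replace horbits (U : Submodule K V) (hU : IsReflectingHyperplane H U) :
      ∃! i, U ∈ orbit H (W i) := by
    simpa only [hmem_orbit] using horbits U hU
  refine nonempty_abelianization_mulEquiv_pi_zmod W (fun i => (hW i).1) ?_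
    (normalClosure_iUnion_fixingSubgroup_eq_top hgen fun U hU => (horbits U hU).exists)
  exact fun i j hij hji => hij ((horbits (W j) (hW j)).unique hji (mem_orbit_self _))

end ReflectionGroup

/-- Let `V` be a finite-dimensional complex vector space and `H` a finite subgroup of `GL(V)`
generated by pseudoreflections. Let `W_1, …, W_k` be representatives of the `H`-orbits of the
reflecting hyperplanes of `H`, and let `e_i` be the order of the pointwise stabilizer
`{h ∈ H : h fixes W_i pointwise}`. Then the abelianization `H/[H,H]` is isomorphic to
`ℤ/e_1ℤ × ⋯ × ℤ/e_kℤ`. -/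
theorem abelianization_of_reflection_group
    {V : Type*} [AddCommGroup V] [Module ℂ V] [FiniteDimensional ℂ V]
    (H : Subgroup (V ≃ₗ[ℂ] V)) [Finite H]
    (hgen : H = Subgroup.closure {g : V ≃ₗ[ℂ] V | g ∈ H ∧ g ≠ 1 ∧
      ∃ W : Submodule ℂ V, Module.finrank ℂ (V ⧸ W) = 1 ∧ ∀ w ∈ W, g w = w})
    (k : ℕ) (W : Fin k → Submodule ℂ V)
    -- each `W i` is a reflecting hyperplane of `H`
    (hW : ∀ i, Module.finrank ℂ (V ⧸ W i) = 1 ∧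
      ∃ g ∈ H, g ≠ 1 ∧ ∀ w ∈ W i, g w = w)
    -- every reflecting hyperplane is in the `H`-orbit of exactly one `W i`
    (horbits : ∀ U : Submodule ℂ V, Module.finrank ℂ (V ⧸ U) = 1 →
      (∃ g ∈ H, g ≠ 1 ∧ ∀ w ∈ U, g w = w) →
      ∃! i : Fin k, ∃ h ∈ H, U = (W i).map (h : V →ₗ[ℂ] V))
    (e : Fin k → ℕ)
    (he : ∀ i, e i = Nat.card {h : H // ∀ w ∈ W i, (h : V ≃ₗ[ℂ] V) w = w}) :
    Nonempty (Abelianization H ≃* ((i : Fin k) → Multiplicative (ZMod (e i)))) := by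
  exact abelianization_of_reflection_group_general H hgen W hW
    (fun U hU => horbits U hU.1 hU.2) e he
end

section
/- Fix an integer m ≥ 1 and let μ_m act on ℂ[x, y] by ℂ-algebra automorphisms determined by ζ·x = ζx and ζ·y = ζ^{−1}y. Then the ring of μ_m-invariant polynomials is isomorphic as a ℂ-algebra to ℂ[a, b, c]/(ab − c^m), via a ↦ x^m, b ↦ y^m, c ↦ xy. -/
open MvPolynomial

/-!
The map `a ↦ x^m`, `b ↦ y^m`, `c ↦ xy` sends monomials to monomials, namely
`a^i b^j c^k ↦ x^(mi+k) y^(mj+k)`, so its image is spanned by the `x^i y^j` with `i ≡ j` modulo `m`.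
Modulo `ab - c^m` every monomial can be rewritten without `ab`, and such a monomial is recovered
from its image; hence the kernel is `(ab - c^m)`. On the other side a root of unity `ζ` multiplies
`x^i y^j` by `ζ^(i-j)`, so testing invariance against one primitive `m`-th root of unity already
forces `i ≡ j` modulo `m` for every monomial that occurs.
-/

namespace AmSingularity

theorem exists_quotient_algEquiv_of_ker_eq_of_range_eq {R A B : Type*} [CommSemiring R]
    [CommRing A] [Algebra R A] [Semiring B] [Algebra R B] {f : A →ₐ[R] B} {I : Ideal A}
    {S : Subalgebra R B} (ker_eq : RingHom.ker f = I) (range_eq : f.range = S) :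
    ∃ e : (A ⧸ I) ≃ₐ[R] S, ∀ a, (e (Ideal.Quotient.mk I a) : B) = f a := by
  subst ker_eq range_eq
  exact ⟨Ideal.quotientKerEquivRange f, fun _ => rfl⟩

section CommSemiring

variable {R : Type*} [CommSemiring R]

theorem coeff_aeval_C_mul_X {σ : Type*} (u : σ → R) (p : MvPolynomial σ R) (d : σ →₀ ℕ) :
    coeff d (aeval (fun i => C (u i) * X i) p) = (d.prod fun i k => u i ^ k) * coeff d p := by
  classical
  induction p using MvPolynomial.induction_on' with
  | add p q hp hq => rw [map_add, coeff_add, hp, hq, coeff_add, mul_add]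
  | monomial e r =>
    have scale_monomial : aeval (fun i => C (u i) * X i) (monomial e r) =
        C (e.prod fun i k => u i ^ k) * monomial e r := by
      rw [aeval_monomial, algebraMap_eq]
      simp only [mul_pow, Finsupp.prod_mul, monomial_eq, map_finsuppProd, map_pow]
      ring
    rw [scale_monomial, coeff_C_mul, coeff_monomial]
    split_ifs with hed
    · rw [hed]
    · simp only [mul_zero]

/-- The action of `ζ` on `R[x,y]`, scaling `x` by `ζ` and `y` by `ζ⁻¹`. -/
noncomputable def antidiagonalScaling (ζ : Rˣ) :
    MvPolynomial (Fin 2) R →ₐ[R] MvPolynomial (Fin 2) R :=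
  aeval ![C (ζ : R) * X 0, C (↑ζ⁻¹ : R) * X 1]

theorem antidiagonalScaling_X_zero (ζ : Rˣ) :
    antidiagonalScaling ζ (X 0) = C (ζ : R) * X 0 := by
  rw [antidiagonalScaling, aeval_X, Matrix.cons_val_zero]

theorem antidiagonalScaling_X_one (ζ : Rˣ) :
    antidiagonalScaling ζ (X 1) = C (↑ζ⁻¹ : R) * X 1 := by
  rw [antidiagonalScaling, aeval_X, Matrix.cons_val_one, Matrix.cons_val_fin_one]

theorem coeff_antidiagonalScaling (ζ : Rˣ) (p : MvPolynomial (Fin 2) R) (d : Fin 2 →₀ ℕ) :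
    coeff d (antidiagonalScaling ζ p) = ↑(ζ ^ d 0 * (ζ ^ d 1)⁻¹) * coeff d p := by
  have images_eq : ![C (ζ : R) * X 0, C (↑ζ⁻¹ : R) * X 1] =
      fun i => C (![(ζ : R), ↑ζ⁻¹] i) * (X i : MvPolynomial (Fin 2) R) := by
    ext1 i
    fin_cases i <;> rfl
  rw [antidiagonalScaling, images_eq, coeff_aeval_C_mul_X]
  simp [Finsupp.prod_fintype]

variable (R) in
/-- The algebra of polynomials in `R[x,y]` invariant under `μ_m(R)`, the group `rootsOfUnity m R`
acting by `antidiagonalScaling`. -/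
noncomputable def muInvariants (m : ℕ) : Subalgebra R (MvPolynomial (Fin 2) R) :=
  ⨅ ζ ∈ rootsOfUnity m R, AlgHom.equalizer (antidiagonalScaling ζ) (AlgHom.id R _)

theorem mem_muInvariants {m : ℕ} {p : MvPolynomial (Fin 2) R} :
    p ∈ muInvariants R m ↔ ∀ ζ ∈ rootsOfUnity m R, antidiagonalScaling ζ p = p := by
  simp [muInvariants, Algebra.mem_iInf]

theorem mem_muInvariants_iff_of_field {K : Type*} [Field K] {m : ℕ} (hm : m ≠ 0)
    {p : MvPolynomial (Fin 2) K} :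
    p ∈ muInvariants K m ↔
      ∀ ζ : K, ζ ^ m = 1 → aeval ![C ζ * X 0, C ζ⁻¹ * X 1] p = p := by
  rw [mem_muInvariants]
  constructor
  · intro hp ζ hζ
    simpa [antidiagonalScaling] using
      hp (Units.ofPowEqOne ζ m hζ hm) (Units.pow_ofPowEqOne hζ hm)
  · intro hp ζ hζ
    simpa [antidiagonalScaling] using hp ζ ((mem_rootsOfUnity' m ζ).mp hζ)

theorem modEq_of_mem_support_of_mem_muInvariants [IsDomain R] {m : ℕ} {ω : Rˣ}
    (hω : IsPrimitiveRoot ω m) {p : MvPolynomial (Fin 2) R} (hp : p ∈ muInvariants R m)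
    {d : Fin 2 →₀ ℕ} (hd : d ∈ p.support) : d 0 ≡ d 1 [MOD m] := by
  have coeff_fixed : (↑(ω ^ d 0 * (ω ^ d 1)⁻¹) : R) * coeff d p = coeff d p := by
    rw [← coeff_antidiagonalScaling, mem_muInvariants.mp hp ω hω.pow_eq_one]
  have weight_eq_one : ω ^ d 0 * (ω ^ d 1)⁻¹ = 1 :=
    Units.val_eq_one.mp ((mul_eq_right₀ (mem_support_iff.mp hd)).mp coeff_fixed)
  rw [hω.eq_orderOf]
  exact pow_eq_pow_iff_modEq.mp (mul_inv_eq_one.mp weight_eq_one)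

/-- The parametrization `a ↦ x^m`, `b ↦ y^m`, `c ↦ xy` of the surface `ab = c^m`, with `a`, `b`,
`c` encoded as `X 0`, `X 1`, `X 2`. -/
noncomputable def param (m : ℕ) : MvPolynomial (Fin 3) R →ₐ[R] MvPolynomial (Fin 2) R :=
  aeval ![X 0 ^ m, X 1 ^ m, X 0 * X 1]

theorem param_X_zero (m : ℕ) : param m (X 0 : MvPolynomial (Fin 3) R) = X 0 ^ m := by
  simp [param]

theorem param_X_one (m : ℕ) : param m (X 1 : MvPolynomial (Fin 3) R) = X 1 ^ m := by
  simp [param]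

theorem param_X_two (m : ℕ) : param m (X 2 : MvPolynomial (Fin 3) R) = X 0 * X 1 := by
  simp [param]

theorem param_X_pow_mul_X_pow_mul_X_pow (m i j k : ℕ) :
    param m (X 0 ^ i * X 1 ^ j * X 2 ^ k : MvPolynomial (Fin 3) R) =
      X 0 ^ (m * i + k) * X 1 ^ (m * j + k) := by
  simp only [map_mul, map_pow, param_X_zero, param_X_one, param_X_two]
  ring

theorem antidiagonalScaling_param {m : ℕ} {ζ : Rˣ} (hζ : ζ ∈ rootsOfUnity m R)
    (p : MvPolynomial (Fin 3) R) : antidiagonalScaling ζ (param m p) = param m p := by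
  have pow_val : (ζ : R) ^ m = 1 := (mem_rootsOfUnity' m ζ).mp hζ
  have pow_inv_val : (↑ζ⁻¹ : R) ^ m = 1 := (mem_rootsOfUnity' m ζ⁻¹).mp (inv_mem hζ)
  have comp_param : (antidiagonalScaling ζ).comp (param m) = param (R := R) m := by
    refine algHom_ext (Fin.forall_fin_succ.mpr ⟨?_, Fin.forall_fin_two.mpr ⟨?_, ?_⟩⟩)
    · change antidiagonalScaling ζ (param m (X 0)) = param m (X 0)
      rw [param_X_zero, map_pow, antidiagonalScaling_X_zero, mul_pow, ← C_pow, pow_val, C_1,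
        one_mul]
    · change antidiagonalScaling ζ (param m (X 1)) = param m (X 1)
      rw [param_X_one, map_pow, antidiagonalScaling_X_one, mul_pow, ← C_pow, pow_inv_val, C_1,
        one_mul]
    · change antidiagonalScaling ζ (param m (X 2)) = param m (X 2)
      rw [param_X_two, map_mul, antidiagonalScaling_X_zero, antidiagonalScaling_X_one,
        mul_mul_mul_comm, ← C_mul, ζ.mul_inv, C_1, one_mul]
  exact DFunLike.congr_fun comp_param p

/-- The linear map sending `x^i y^j` to the monomial in `a`, `b`, `c` without a factor `ab` that
`param m` sends back to `x^i y^j` when `i ≡ j [MOD m]`. One of the truncated differences vanishes;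
on the remaining monomials, where the divisions are inexact, the values are immaterial. -/
noncomputable def paramSection (m : ℕ) :
    MvPolynomial (Fin 2) R →ₗ[R] MvPolynomial (Fin 3) R :=
  (basisMonomials (Fin 2) R).constr R fun d =>
    X 0 ^ ((d 0 - d 1) / m) * X 1 ^ ((d 1 - d 0) / m) * X 2 ^ min (d 0) (d 1)

theorem paramSection_X_pow_mul_X_pow (m i j : ℕ) :
    paramSection m (X 0 ^ i * X 1 ^ j : MvPolynomial (Fin 2) R) =
      X 0 ^ ((i - j) / m) * X 1 ^ ((j - i) / m) * X 2 ^ min i j := by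
  have eq_basisMonomials : (X 0 ^ i * X 1 ^ j : MvPolynomial (Fin 2) R) =
      basisMonomials (Fin 2) R (Finsupp.equivFunOnFinite.symm ![i, j]) := by
    simp [monomial_fin_two]
  rw [eq_basisMonomials, paramSection, Module.Basis.constr_basis]
  simp

theorem param_paramSection_X_pow_mul_X_pow {m i j : ℕ} (hij : i ≡ j [MOD m]) :
    param m (paramSection m (X 0 ^ i * X 1 ^ j : MvPolynomial (Fin 2) R)) = X 0 ^ i * X 1 ^ j := by
  rw [paramSection_X_pow_mul_X_pow, param_X_pow_mul_X_pow_mul_X_pow,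
    Nat.mul_div_cancel' (Nat.dvd_of_mod_eq_zero (Nat.sub_mod_eq_zero_of_mod_eq hij)),
    Nat.mul_div_cancel' (Nat.dvd_of_mod_eq_zero (Nat.sub_mod_eq_zero_of_mod_eq hij.symm)),
    Nat.sub_add_min_cancel, min_comm, Nat.sub_add_min_cancel]

theorem mem_range_param {m : ℕ} {p : MvPolynomial (Fin 2) R}
    (hp : ∀ d ∈ p.support, d 0 ≡ d 1 [MOD m]) : p ∈ (param (R := R) m).range := by
  rw [p.as_sum]
  refine sum_mem fun d hd => ?_
  rw [monomial_fin_two, mul_assoc, ← smul_eq_C_mul]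
  exact Subalgebra.smul_mem _
    ((AlgHom.mem_range _).mpr ⟨_, param_paramSection_X_pow_mul_X_pow (hp d hd)⟩) _

theorem range_param [IsDomain R] {m : ℕ} {ω : Rˣ} (hω : IsPrimitiveRoot ω m) :
    (param m).range = muInvariants R m := by
  apply le_antisymm
  · rintro _ ⟨p, rfl⟩
    exact mem_muInvariants.mpr fun ζ hζ => antidiagonalScaling_param hζ p
  · intro p hp
    exact mem_range_param fun d hd => modEq_of_mem_support_of_mem_muInvariants hω hp hd

end CommSemiring

section CommRing

variable {R : Type*} [CommRing R] {m : ℕ}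

variable (R m) in
/-- The ideal `(ab - c^m)` of `R[a,b,c]`, defining the `A_{m-1}` singularity. -/
noncomputable abbrev singularityIdeal : Ideal (MvPolynomial (Fin 3) R) :=
  Ideal.span {X 0 * X 1 - X 2 ^ m}

theorem mk_X_two_pow_mul (n : ℕ) :
    Ideal.Quotient.mk (singularityIdeal R m) (X 2 ^ (m * n)) =
      Ideal.Quotient.mk (singularityIdeal R m) (X 0 ^ n * X 1 ^ n) := by
  have relation : Ideal.Quotient.mk (singularityIdeal R m) (X 2 ^ m) =
      Ideal.Quotient.mk (singularityIdeal R m) (X 0 * X 1) :=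
    (Ideal.Quotient.eq.mpr (Ideal.mem_span_singleton_self _)).symm
  rw [pow_mul, map_pow, relation, ← map_pow, mul_pow]

theorem mk_paramSection_X_pow_mul_X_pow (hm : m ≠ 0) (i j k : ℕ) :
    Ideal.Quotient.mk (singularityIdeal R m)
        (paramSection m (X 0 ^ (m * i + k) * X 1 ^ (m * j + k))) =
      Ideal.Quotient.mk (singularityIdeal R m) (X 0 ^ i * X 1 ^ j * X 2 ^ k) := by
  set π := Ideal.Quotient.mk (singularityIdeal R m)
  calc π (paramSection m (X 0 ^ (m * i + k) * X 1 ^ (m * j + k)))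
      = π (X 0 ^ (i - j) * X 1 ^ (j - i) * X 2 ^ (m * min i j + k)) := by
        rw [paramSection_X_pow_mul_X_pow, Nat.add_sub_add_right, Nat.add_sub_add_right,
          ← Nat.mul_sub, ← Nat.mul_sub, Nat.mul_div_cancel_left _ hm.pos,
          Nat.mul_div_cancel_left _ hm.pos, min_add_add_right, Nat.mul_min_mul_left]
    _ = π (X 0 ^ (i - j) * X 1 ^ (j - i) * (X 0 ^ min i j * X 1 ^ min i j) * X 2 ^ k) := by
        rw [pow_add, ← mul_assoc, map_mul, map_mul, mk_X_two_pow_mul, ← map_mul, ← map_mul]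
    _ = π (X 0 ^ (i - j + min i j) * X 1 ^ (j - i + min i j) * X 2 ^ k) := by
        rw [mul_mul_mul_comm, ← pow_add, ← pow_add]
    _ = π (X 0 ^ i * X 1 ^ j * X 2 ^ k) := by
        rw [Nat.sub_add_min_cancel, min_comm, Nat.sub_add_min_cancel]

theorem mk_paramSection_param (hm : m ≠ 0) (p : MvPolynomial (Fin 3) R) :
    Ideal.Quotient.mk (singularityIdeal R m) (paramSection m (param m p)) =
      Ideal.Quotient.mk (singularityIdeal R m) p := by
  induction p using MvPolynomial.induction_on' with
  | add p q hp hq => rw [map_add, map_add, map_add, hp, hq, map_add]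
  | monomial d r =>
    have monomial_eq_smul : monomial d r = r • (X 0 ^ d 0 * X 1 ^ d 1 * X 2 ^ d 2) := by
      simp [monomial_eq, Finsupp.prod_fintype, Fin.prod_univ_three, smul_eq_C_mul]
    rw [monomial_eq_smul, map_smul, map_smul, param_X_pow_mul_X_pow_mul_X_pow, smul_eq_C_mul,
      smul_eq_C_mul, map_mul (Ideal.Quotient.mk _), map_mul (Ideal.Quotient.mk _),
      mk_paramSection_X_pow_mul_X_pow hm]

theorem ker_param (hm : m ≠ 0) : RingHom.ker (param (R := R) m) = singularityIdeal R m := by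
  apply le_antisymm
  · intro p hp
    rw [← Ideal.Quotient.eq_zero_iff_mem, ← mk_paramSection_param hm, RingHom.mem_ker.mp hp,
      map_zero, map_zero]
  · rw [Ideal.span_singleton_le_iff_mem, RingHom.mem_ker, map_sub, map_mul, map_pow,
      param_X_zero, param_X_one, param_X_two, mul_pow, sub_self]

end CommRing

end AmSingularity

open AmSingularity in
theorem mu_m_invariants_iso_Am_singularity_general {R : Type*} [CommRing R] [IsDomain R] {m : ℕ}
    (hm : m ≠ 0) {ω : R} (hω : IsPrimitiveRoot ω m) :
    ∃ e : (MvPolynomial (Fin 3) R ⧸ singularityIdeal R m) ≃ₐ[R] muInvariants R m,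
      (e (Ideal.Quotient.mk _ (X 0)) : MvPolynomial (Fin 2) R) = X 0 ^ m ∧
      (e (Ideal.Quotient.mk _ (X 1)) : MvPolynomial (Fin 2) R) = X 1 ^ m ∧
      (e (Ideal.Quotient.mk _ (X 2)) : MvPolynomial (Fin 2) R) = X 0 * X 1 := by
  obtain ⟨e, e_mk⟩ := exists_quotient_algEquiv_of_ker_eq_of_range_eq
    (ker_param hm) (range_param (hω.isUnit_unit hm))
  exact ⟨e, (e_mk _).trans (param_X_zero m), (e_mk _).trans (param_X_one m),
    (e_mk _).trans (param_X_two m)⟩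

/-- Fix `m ≥ 1` and let `μ_m` act on `ℂ[x,y]` by `ζ·x = ζx`, `ζ·y = ζ⁻¹y`. Then the ring of
`μ_m`-invariant polynomials is isomorphic as a ℂ-algebra to `ℂ[a,b,c]/(ab - c^m)`, via
`a ↦ x^m`, `b ↦ y^m`, `c ↦ xy`. -/
theorem mu_m_invariants_iso_Am_singularity (m : ℕ) (hm : 1 ≤ m)
    (Inv : Subalgebra ℂ (MvPolynomial (Fin 2) ℂ))
    (hInv : ∀ p : MvPolynomial (Fin 2) ℂ, p ∈ Inv ↔
      ∀ ζ : ℂ, ζ ^ m = 1 → aeval ![C ζ * X 0, C ζ⁻¹ * X 1] p = p) :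
    ∃ e : (MvPolynomial (Fin 3) ℂ ⧸
        Ideal.span {(X 0 * X 1 - X 2 ^ m : MvPolynomial (Fin 3) ℂ)}) ≃ₐ[ℂ] Inv,
      ((e (Ideal.Quotient.mk _ (X 0)) : Inv) : MvPolynomial (Fin 2) ℂ) = X 0 ^ m ∧
      ((e (Ideal.Quotient.mk _ (X 1)) : Inv) : MvPolynomial (Fin 2) ℂ) = X 1 ^ m ∧
      ((e (Ideal.Quotient.mk _ (X 2)) : Inv) : MvPolynomial (Fin 2) ℂ) = X 0 * X 1 := by
  obtain rfl : Inv = AmSingularity.muInvariants ℂ m := Subalgebra.ext fun p =>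
    (hInv p).trans (AmSingularity.mem_muInvariants_iff_of_field (by lia)).symm
  exact mu_m_invariants_iso_Am_singularity_general (by lia) (Complex.isPrimitiveRoot_exp m (by lia))
end
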